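/- arXiv:2601.13906 — 3 statements merged into one kernel-verified Lean document; each statement's English description precedes it below -/
import Mathlib

section
/- Let 𝒫₁ = {AABB, ABAB}, where AABB is the 2-pattern {{1,2},{3,4}} and ABAB is the 2-pattern {{1,3},{2,4}}. Then asymptotically almost surely z_{𝒫₁}(RM_n^(2)) = Θ(n^(1/2)); that is, there exist constants c₁, c₂ > 0 such that the probability that c₁·n^(1/2) ≤ z_{𝒫₁}(RM_n^(2)) ≤ c₂·n^(1/2) tends to 1 as n → ∞. -/
open Finset
open scoped Classical

/-- An ordered `r`-matching of size `n`: a partition of `[r*n] = {1,…,r*n}` into `n`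
pairwise disjoint `r`-element subsets (the edges). -/
def IsOrderedMatching (r n : ℕ) (M : Finset (Finset ℕ)) : Prop :=
  M.card = n ∧ (∀ e ∈ M, e.card = r) ∧
  (∀ e ∈ M, ∀ f ∈ M, e ≠ f → Disjoint e f) ∧
  M.biUnion id = Finset.Icc 1 (r * n)

/-- Two disjoint `r`-element sets `e`, `f` form the `r`-pattern `P`: the unique
order-preserving bijection from `e ∪ f` onto `[2r]` maps the pair `{e, f}` onto `P`. -/
def FormsPattern (r : ℕ) (e f : Finset ℕ) (P : Finset (Finset ℕ)) : Prop :=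
  ∃ φ : ℕ → ℕ, StrictMonoOn φ ↑(e ∪ f) ∧
    (e ∪ f).image φ = Finset.Icc 1 (2 * r) ∧
    ({e.image φ, f.image φ} : Finset (Finset ℕ)) = P

/-- A `Ps`-clique: a family of pairwise disjoint `r`-element subsets of `ℕ`, every two of
which form a pattern belonging to `Ps`. -/
def IsClique (r : ℕ) (Ps : Set (Finset (Finset ℕ))) (K : Finset (Finset ℕ)) : Prop :=
  (∀ e ∈ K, e.card = r) ∧ (∀ e ∈ K, ∀ f ∈ K, e ≠ f → Disjoint e f) ∧
  (∀ e ∈ K, ∀ f ∈ K, e ≠ f → ∃ P ∈ Ps, FormsPattern r e f P)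

/-- `z_Ps(M)`: the maximum size of a subfamily of `M` that is a `Ps`-clique. -/
noncomputable def zClique (r : ℕ) (Ps : Set (Finset (Finset ℕ))) (M : Finset (Finset ℕ)) : ℕ :=
  sSup {k | ∃ K : Finset (Finset ℕ), K ⊆ M ∧ IsClique r Ps K ∧ K.card = k}

/-- All ordered `r`-matchings of size `n` (as a finset). -/
noncomputable def matchingFamilies (r n : ℕ) : Finset (Finset (Finset ℕ)) :=
  ((Finset.Icc 1 (r * n)).powerset.powerset).filter (IsOrderedMatching r n)

/-- The probability of the event `A` for a uniformly random ordered `r`-matching of size `n`. -/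
noncomputable def prob (r n : ℕ) (A : Finset (Finset ℕ) → Prop) : ℝ :=
  (((matchingFamilies r n).filter A).card : ℝ) / ((matchingFamilies r n).card : ℝ)

/-- Expectation of `X` with respect to a uniformly random ordered `r`-matching of size `n`. -/
noncomputable def expect (r n : ℕ) (X : Finset (Finset ℕ) → ℝ) : ℝ :=
  (∑ M ∈ matchingFamilies r n, X M) / ((matchingFamilies r n).card : ℝ)

/-- An `r`-partite `r`-pattern: each edge contains exactly one of `{2i-1, 2i}` for each
`i = 1, …, r`. -/
def IsPartitePattern (r : ℕ) (P : Finset (Finset ℕ)) : Prop :=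
  IsOrderedMatching r 2 P ∧
  ∀ e ∈ P, ∀ i ∈ Finset.Icc 1 r, (e ∩ {2 * i - 1, 2 * i}).card = 1

/-- An `r`-pattern `P` is collectable if there exist arbitrarily large `{P}`-cliques. -/
def Collectable (r : ℕ) (P : Finset (Finset ℕ)) : Prop :=
  ∀ k : ℕ, ∃ K : Finset (Finset ℕ), IsClique r {P} K ∧ K.card = k

/-- The word of a pattern `P` over `{A=true, B=false}`: the `j`-th letter is `true` iff
vertex `j` lies in the edge of `P` containing `1`. -/
noncomputable def patternWord (r : ℕ) (P : Finset (Finset ℕ)) : List Bool :=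
  (List.range (2 * r)).map (fun j => decide (∃ e ∈ P, 1 ∈ e ∧ j + 1 ∈ e))

/-- `lam` is a splitting of the word `w` into consecutive blocks of the form
`A^t B^t` or `B^t A^t` with half-lengths given by `lam`. -/
def IsBlockSplitting (w : List Bool) (lam : List ℕ) : Prop :=
  (∀ t ∈ lam, 1 ≤ t) ∧
  ∃ bs : List Bool, bs.length = lam.length ∧
    w = (List.zipWith (fun t b => List.replicate t b ++ List.replicate t !b) lam bs).flatten

/-- The pattern `P` has composition `lam` (the sequence of half-lengths of the blocks of
its unique splitting). -/
def HasComposition (r : ℕ) (P : Finset (Finset ℕ)) (lam : List ℕ) : Prop :=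
  IsBlockSplitting (patternWord r P) lam

/-- Two distinct collectable `r`-patterns are harmonious if they have the same composition. -/
def Harmonious (r : ℕ) (P Q : Finset (Finset ℕ)) : Prop :=
  P ≠ Q ∧ Collectable r P ∧ Collectable r Q ∧
  ∃ lam : List ℕ, HasComposition r P lam ∧ HasComposition r Q lam

/-- A pair of distinct `r`-patterns is a mismatch if exactly one of them is collectable, or
both are collectable but their compositions differ. -/
def Mismatch (r : ℕ) (P Q : Finset (Finset ℕ)) : Prop :=
  P ≠ Q ∧
  ((Collectable r P ∧ ¬ Collectable r Q) ∨
   (¬ Collectable r P ∧ Collectable r Q) ∨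
   (Collectable r P ∧ Collectable r Q ∧
     ¬ ∃ lam : List ℕ, HasComposition r P lam ∧ HasComposition r Q lam))

/-- The trace of an ordered `r`-matching of size `k` on `[rk]`: the `j`-th letter equals
`i` when `j` is the `i`-th smallest element of the edge containing `j`. -/
noncomputable def trace (r k : ℕ) (M : Finset (Finset ℕ)) : List ℕ :=
  (List.range (r * k)).map (fun j₀ =>
    ((Finset.Icc 1 (r * k)).filter
      (fun x => x ≤ j₀ + 1 ∧ ∃ e ∈ M, j₀ + 1 ∈ e ∧ x ∈ e)).card)

/-- `a_Ps(k)`: the number of `Ps`-cliques of size `k` whose edges partition `[rk]`. -/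
noncomputable def cliqueCount (r : ℕ) (Ps : Set (Finset (Finset ℕ))) (k : ℕ) : ℕ :=
  (((Finset.Icc 1 (r * k)).powerset.powerset).filter
    (fun M => IsOrderedMatching r k M ∧ IsClique r Ps M)).card

/-- The maximum size of any `Ps`-clique whatsoever. -/
noncomputable def maxCliqueSize (r : ℕ) (Ps : Set (Finset (Finset ℕ))) : ℕ :=
  sSup {k | ∃ K : Finset (Finset ℕ), IsClique r Ps K ∧ K.card = k}

/-- `M` contains a copy of the ordered `r`-matching `H` of size `k`: a subfamily `N ⊆ M` of
`k` edges such that the order-preserving bijection from the union of the edges of `N`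
onto `[rk]` maps `N` onto `H`. -/
def ContainsCopy (r k : ℕ) (H M : Finset (Finset ℕ)) : Prop :=
  ∃ N ⊆ M, N.card = k ∧ ∃ φ : ℕ → ℕ,
    StrictMonoOn φ ↑(N.biUnion id) ∧
    (N.biUnion id).image φ = Finset.Icc 1 (r * k) ∧
    N.image (fun e => e.image φ) = H

/-- Delete the `j`-th smallest element of the finite set `e`. -/
def deleteJth (j : ℕ) (e : Finset ℕ) : Finset ℕ :=
  e.filter (fun x => (e.filter (· ≤ x)).card ≠ j)

/-- Relabel the elements of `e` order-preservingly by their ranks in `V`. -/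
def relabel (V : Finset ℕ) (e : Finset ℕ) : Finset ℕ :=
  e.image (fun x => (V.filter (· ≤ x)).card)

/-- `S^(−j)`: delete from each edge of the pattern `S` its `j`-th smallest element and
relabel the remaining vertices order-preservingly. -/
def patternDelete (j : ℕ) (S : Finset (Finset ℕ)) : Finset (Finset ℕ) :=
  (S.image (deleteJth j)).image (relabel ((S.image (deleteJth j)).biUnion id))

/-- The 2-pattern `AABB`. -/
def pAABB : Finset (Finset ℕ) := {{1, 2}, {3, 4}}
/-- The 2-pattern `ABAB`. -/
def pABAB : Finset (Finset ℕ) := {{1, 3}, {2, 4}}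

/-- Left endpoint. -/
noncomputable def loE (e : Finset ℕ) : ℕ := sInf (e : Set ℕ)
/-- Right endpoint. -/
noncomputable def hiE (e : Finset ℕ) : ℕ := e.sup id

lemma lohi_pair {a b : ℕ} (h : a < b) : loE {a, b} = a ∧ hiE {a, b} = b := by
  constructor
  · unfold loE
    have : ((({a, b} : Finset ℕ)) : Set ℕ) = {a, b} := by simp
    rw [this, csInf_pair]
    simp [h.le]
  · unfold hiE
    simp [h.le]

lemma exists_pair {e : Finset ℕ} (h : e.card = 2) : ∃ a b, a < b ∧ e = {a, b} := by
  obtain ⟨x, y, hxy, rfl⟩ := Finset.card_eq_two.1 h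
  rcases lt_or_gt_of_ne hxy with h | h
  · exact ⟨x, y, h, rfl⟩
  · exact ⟨y, x, h, Finset.pair_comm _ _⟩

lemma edge_form {e : Finset ℕ} (h : e.card = 2) : loE e < hiE e ∧ e = {loE e, hiE e} := by
  obtain ⟨a, b, hab, rfl⟩ := exists_pair h
  rw [(lohi_pair hab).1, (lohi_pair hab).2]
  exact ⟨hab, rfl⟩

lemma formsPattern_symm {r : ℕ} {e f : Finset ℕ} {P : Finset (Finset ℕ)}
    (h : FormsPattern r e f P) : FormsPattern r f e P := by
  obtain ⟨φ, h1, h2, h3⟩ := h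
  refine ⟨φ, ?_, ?_, ?_⟩
  · rwa [Finset.union_comm]
  · rwa [Finset.union_comm]
  · rwa [Finset.pair_comm]

lemma pat_of {a b c d : ℕ} (hab : a < b) (hcd : c < d) (hac : a < c) (hbd : b < d) (hbc : b ≠ c) :
    ∃ P ∈ ({pAABB, pABAB} : Set (Finset (Finset ℕ))), FormsPattern 2 {a, b} {c, d} P := by
  rcases lt_or_gt_of_ne hbc with h | h
  · refine ⟨pAABB, by simp, fun x => if x = a then 1 else if x = b then 2 else if x = c then 3 else 4,
      ?_, ?_, ?_⟩
    · intro x hx y hy hxy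
      simp at hx hy
      grind
    · have h1 : b ≠ a := by omega
      have h2 : c ≠ a := by omega
      have h3 : c ≠ b := by omega
      have h4 : d ≠ a := by omega
      have h5 : d ≠ b := by omega
      have h6 : d ≠ c := by omega
      simp [Finset.image_insert, h1, h2, h3, h4, h5, h6]
      decide
    · have h1 : b ≠ a := by omega
      have h2 : c ≠ a := by omega
      have h3 : c ≠ b := by omega
      have h4 : d ≠ a := by omega
      have h5 : d ≠ b := by omega
      have h6 : d ≠ c := by omega
      simp [Finset.image_insert, h1, h2, h3, h4, h5, h6, pAABB]
  · refine ⟨pABAB, by simp, fun x => if x = a then 1 else if x = c then 2 else if x = b then 3 else 4,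
      ?_, ?_, ?_⟩
    · intro x hx y hy hxy
      simp at hx hy
      grind
    · have h1 : b ≠ a := by omega
      have h2 : c ≠ a := by omega
      have h3 : b ≠ c := by omega
      have h4 : d ≠ a := by omega
      have h5 : d ≠ b := by omega
      have h6 : d ≠ c := by omega
      simp [Finset.image_insert, h1, h2, h3, h4, h5, h6]
      decide
    · have h1 : b ≠ a := by omega
      have h2 : c ≠ a := by omega
      have h3 : b ≠ c := by omega
      have h4 : d ≠ a := by omega
      have h5 : d ≠ b := by omega
      have h6 : d ≠ c := by omega
      simp [Finset.image_insert, h1, h2, h3, h4, h5, h6, pABAB]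

lemma not_pat {a b c d : ℕ} (hac : a < c) (hcd : c < d) (hdb : d < b) {P : Finset (Finset ℕ)}
    (hP : P ∈ ({pAABB, pABAB} : Set (Finset (Finset ℕ)))) : ¬ FormsPattern 2 {a, b} {c, d} P := by
  rintro ⟨φ, h1, h2, h3⟩
  have e1 : φ a < φ c := h1 (by simp) (by simp) hac
  have e2 : φ c < φ d := h1 (by simp) (by simp) hcd
  have e3 : φ d < φ b := h1 (by simp) (by simp) hdb
  have m1 : φ a ∈ Finset.Icc 1 (2 * 2) := by rw [← h2]; exact Finset.mem_image_of_mem _ (by simp)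
  have m2 : φ b ∈ Finset.Icc 1 (2 * 2) := by rw [← h2]; exact Finset.mem_image_of_mem _ (by simp)
  rw [Finset.mem_Icc] at m1 m2
  have q1 : φ a = 1 := by omega
  have q2 : φ c = 2 := by omega
  have q3 : φ d = 3 := by omega
  have q4 : φ b = 4 := by omega
  simp only [Finset.image_insert, Finset.image_singleton, q1, q2, q3, q4] at h3
  simp only [Set.mem_insert_iff, Set.mem_singleton_iff] at hP
  rcases hP with rfl | rfl
  · revert h3; unfold pAABB; decide
  · revert h3; unfold pABAB; decide

/-- `e` lies below `f`: both endpoints are smaller. -/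
def Lt2 (e f : Finset ℕ) : Prop := loE e < loE f ∧ hiE e < hiE f

lemma pat_iff {e f : Finset ℕ} (he : e.card = 2) (hf : f.card = 2) (hd : Disjoint e f) :
    (∃ P ∈ ({pAABB, pABAB} : Set (Finset (Finset ℕ))), FormsPattern 2 e f P) ↔
      Lt2 e f ∨ Lt2 f e := by
  obtain ⟨a, b, hab, rfl⟩ := exists_pair he
  obtain ⟨c, d, hcd, rfl⟩ := exists_pair hf
  unfold Lt2
  rw [(lohi_pair hab).1, (lohi_pair hab).2, (lohi_pair hcd).1, (lohi_pair hcd).2]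
  simp only [Finset.disjoint_insert_left, Finset.disjoint_singleton_left, Finset.mem_insert,
    Finset.mem_singleton, not_or] at hd
  obtain ⟨⟨h1, h2⟩, h3, h4⟩ := hd
  constructor
  · rintro ⟨P, hP, h⟩
    by_contra hcon
    have : (a < c ∧ d < b) ∨ (c < a ∧ b < d) := by omega
    rcases this with h' | h'
    · exact not_pat h'.1 hcd h'.2 hP h
    · exact not_pat h'.1 hab h'.2 hP (formsPattern_symm h)
  · rintro (h | h)
    · exact pat_of hab hcd h.1 h.2 h3
    · obtain ⟨P, hP, h⟩ := pat_of hcd hab h.1 h.2 (fun h => h2 h.symm)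
      exact ⟨P, hP, formsPattern_symm h⟩

/-- Perfect matchings of a finite set. -/
noncomputable def PM (V : Finset ℕ) : Finset (Finset (Finset ℕ)) :=
  V.powerset.powerset.filter (fun M => (∀ e ∈ M, e.card = 2) ∧
    (∀ e ∈ M, ∀ f ∈ M, e ≠ f → Disjoint e f) ∧ M.biUnion id = V)

lemma mem_PM {V : Finset ℕ} {M : Finset (Finset ℕ)} : M ∈ PM V ↔ (∀ e ∈ M, e.card = 2) ∧
    (∀ e ∈ M, ∀ f ∈ M, e ≠ f → Disjoint e f) ∧ M.biUnion id = V := by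
  unfold PM
  rw [Finset.mem_filter, and_iff_right_iff_imp]
  rintro ⟨-, -, h⟩
  rw [Finset.mem_powerset]
  intro e he
  rw [Finset.mem_powerset, ← h]
  exact Finset.subset_biUnion_of_mem id he

lemma card_biUnion_edges {M : Finset (Finset ℕ)} (h1 : ∀ e ∈ M, e.card = 2)
    (h2 : ∀ e ∈ M, ∀ f ∈ M, e ≠ f → Disjoint e f) : (M.biUnion id).card = 2 * M.card := by
  rw [Finset.card_biUnion (t := id) (fun e he f hf hne => h2 e he f hf hne)]
  rw [Finset.sum_congr rfl (fun e he => (h1 e he : (id e).card = 2))]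
  simp [mul_comm]

lemma families_eq (n : ℕ) : matchingFamilies 2 n = PM (Finset.Icc 1 (2 * n)) := by
  unfold matchingFamilies PM
  apply Finset.filter_congr
  intro M _
  unfold IsOrderedMatching
  constructor
  · rintro ⟨_, h⟩; exact h
  · intro h
    refine ⟨?_, h⟩
    have := card_biUnion_edges h.1 h.2.1
    rw [h.2.2] at this
    simp at this
    omega

/-- Double factorial numbers `(2n-1)!!`. -/
def dF : ℕ → ℕ
  | 0 => 1
  | n + 1 => (2 * n + 1) * dF n

lemma card_sup {V : Finset ℕ} {K : Finset (Finset ℕ)} (hK : ∀ e ∈ K, e.card = 2)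
    (hKd : ∀ e ∈ K, ∀ f ∈ K, e ≠ f → Disjoint e f) (hKV : K.biUnion id ⊆ V) :
    ((PM V).filter (fun M => K ⊆ M)).card = (PM (V \ K.biUnion id)).card := by
  apply Finset.card_bij' (fun M _ => M \ K) (fun M _ => M ∪ K)
  · intro M hM
    rw [Finset.mem_filter, mem_PM] at hM
    obtain ⟨⟨h1, h2, h3⟩, h4⟩ := hM
    rw [mem_PM]
    refine ⟨fun e he => h1 e (Finset.mem_sdiff.1 he).1,
      fun e he f hf => h2 e (Finset.mem_sdiff.1 he).1 f (Finset.mem_sdiff.1 hf).1, ?_⟩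
    ext x
    simp only [Finset.mem_biUnion, Finset.mem_sdiff, id]
    constructor
    · rintro ⟨e, ⟨he, heK⟩, hx⟩
      refine ⟨?_, ?_⟩
      · rw [← h3, Finset.mem_biUnion]; exact ⟨e, he, hx⟩
      · rintro ⟨f, hf, hxf⟩
        have hne : e ≠ f := by rintro rfl; exact heK hf
        exact Finset.disjoint_left.1 (h2 e he f (h4 hf) hne) hx hxf
    · rintro ⟨hx, hxK⟩
      rw [← h3, Finset.mem_biUnion] at hx
      obtain ⟨e, he, hx⟩ := hx
      exact ⟨e, ⟨he, fun h => hxK ⟨e, h, hx⟩⟩, hx⟩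
  · intro M hM
    rw [mem_PM] at hM
    obtain ⟨h1, h2, h3⟩ := hM
    have key : ∀ e ∈ M, ∀ f ∈ K, Disjoint e f := by
      intro e he f hf
      rw [Finset.disjoint_left]
      intro x hx hxf
      have : x ∈ V \ K.biUnion id := by rw [← h3, Finset.mem_biUnion]; exact ⟨e, he, hx⟩
      rw [Finset.mem_sdiff, Finset.mem_biUnion] at this
      exact this.2 ⟨f, hf, hxf⟩
    rw [Finset.mem_filter, mem_PM]
    refine ⟨⟨?_, ?_, ?_⟩, Finset.subset_union_right⟩
    · intro e he
      rcases Finset.mem_union.1 he with h | h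
      · exact h1 e h
      · exact hK e h
    · intro e he f hf hne
      rcases Finset.mem_union.1 he with h | h <;> rcases Finset.mem_union.1 hf with h' | h'
      · exact h2 e h f h' hne
      · exact key e h f h'
      · exact (key f h' e h).symm
      · exact hKd e h f h' hne
    · rw [Finset.union_biUnion, h3]
      exact Finset.sdiff_union_of_subset hKV
  · intro M hM
    exact Finset.sdiff_union_of_subset (Finset.mem_filter.1 hM).2
  · intro M hM
    rw [mem_PM] at hM
    obtain ⟨h1, h2, h3⟩ := hM
    have : Disjoint M K := by
      rw [Finset.disjoint_left]
      intro e he heK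
      have hc := h1 e he
      obtain ⟨a, b, _, rfl⟩ := exists_pair hc
      have : a ∈ V \ K.biUnion id := by rw [← h3, Finset.mem_biUnion]; exact ⟨_, he, by simp⟩
      rw [Finset.mem_sdiff, Finset.mem_biUnion] at this
      exact this.2 ⟨_, heK, by simp⟩
    exact Finset.union_sdiff_cancel_right this

lemma card_PM : ∀ (n : ℕ) (V : Finset ℕ), V.card = 2 * n → (PM V).card = dF n := by
  intro n
  induction n with
  | zero =>
    intro V hV
    have hV : V = ∅ := by simpa using hV
    subst hV
    have : PM ∅ = {∅} := by
      ext M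
      rw [mem_PM, Finset.mem_singleton]
      constructor
      · rintro ⟨h1, h2, h3⟩
        by_contra hne
        obtain ⟨e, he⟩ := Finset.nonempty_iff_ne_empty.2 hne
        have := Finset.subset_biUnion_of_mem id he
        rw [h3] at this
        have h := h1 e he
        have : e = ∅ := Finset.subset_empty.1 this
        subst this
        simp at h
      · rintro rfl
        simp
    rw [this]; rfl
  | succ n ih =>
    intro V hV
    obtain ⟨v, hv⟩ : V.Nonempty := by rw [← Finset.card_pos]; omega
    have hun : PM V = (V.erase v).biUnion
        (fun w => (PM V).filter (fun M => ({{v, w}} : Finset (Finset ℕ)) ⊆ M)) := by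
      ext M
      simp only [Finset.mem_biUnion, Finset.mem_filter, Finset.singleton_subset_iff]
      constructor
      · intro hM
        have hM' := hM
        rw [mem_PM] at hM'
        obtain ⟨h1, h2, h3⟩ := hM'
        have hv' := hv
        rw [← h3, Finset.mem_biUnion] at hv'
        obtain ⟨e, he, hve⟩ := hv'
        have hsub : e ⊆ V := by
          have := Finset.subset_biUnion_of_mem id he
          rwa [h3] at this
        obtain ⟨a, b, hab, rfl⟩ := exists_pair (h1 e he)
        simp only [id, Finset.mem_insert, Finset.mem_singleton] at hve
        rcases hve with rfl | rfl
        · exact ⟨b, Finset.mem_erase.2 ⟨hab.ne', hsub (by simp)⟩, hM, he⟩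
        · exact ⟨a, Finset.mem_erase.2 ⟨hab.ne, hsub (by simp)⟩, hM, by rwa [Finset.pair_comm]⟩
      · rintro ⟨w, _, hM, _⟩
        exact hM
    rw [hun, Finset.card_biUnion]
    · have : ∀ w ∈ V.erase v, ((PM V).filter
          (fun M => ({{v, w}} : Finset (Finset ℕ)) ⊆ M)).card = dF n := by
        intro w hw
        obtain ⟨hwv, hwV⟩ := Finset.mem_erase.1 hw
        have hc : ({v, w} : Finset ℕ).card = 2 := Finset.card_pair hwv.symm
        have hs : ({v, w} : Finset ℕ) ⊆ V := by
          intro x hx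
          simp at hx
          rcases hx with rfl | rfl <;> assumption
        rw [card_sup]
        · apply ih
          rw [Finset.singleton_biUnion, id, Finset.card_sdiff_of_subset hs, hc]
          omega
        · simpa using hc
        · simp
        · simpa using hs
      rw [Finset.sum_congr rfl this, Finset.sum_const, Finset.card_erase_of_mem hv, hV]
      simp only [dF, smul_eq_mul]
      congr 1
    · intro w hw w' hw' hne
      rw [Function.onFun, Finset.disjoint_left]
      intro M hM hM'
      simp only [Finset.mem_filter, Finset.singleton_subset_iff] at hM hM'
      have h2 := (mem_PM.1 hM.1).2.1
      by_cases h : ({v, w} : Finset ℕ) = {v, w'}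
      · have : w ∈ ({v, w'} : Finset ℕ) := by rw [← h]; simp
        simp at this
        rcases this with h | h
        · exact (Finset.mem_erase.1 hw).1 h
        · exact hne h
      · have := h2 _ hM.2 _ hM'.2 h
        exact (Finset.disjoint_left.1 this : ∀ ⦃a⦄, _ → _) (Finset.mem_insert_self v _) (Finset.mem_insert_self v _)

/-- Families of pairwise disjoint pairs, every two of which are comparable. -/
def NN (K : Finset (Finset ℕ)) : Prop :=
  (∀ e ∈ K, e.card = 2) ∧ (∀ e ∈ K, ∀ f ∈ K, e ≠ f → Disjoint e f) ∧
  (∀ e ∈ K, ∀ f ∈ K, e ≠ f → Lt2 e f ∨ Lt2 f e)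

lemma isClique_iff (K : Finset (Finset ℕ)) : IsClique 2 {pAABB, pABAB} K ↔ NN K := by
  unfold IsClique NN
  refine and_congr_right fun h1 => and_congr_right fun h2 => ?_
  constructor
  · intro h e he f hf hne
    exact (pat_iff (h1 e he) (h1 f hf) (h2 e he f hf hne)).1 (h e he f hf hne)
  · intro h e he f hf hne
    exact (pat_iff (h1 e he) (h1 f hf) (h2 e he f hf hne)).2 (h e he f hf hne)

lemma NN.mono {K K' : Finset (Finset ℕ)} (h : NN K) (hs : K' ⊆ K) : NN K' :=
  ⟨fun e he => h.1 e (hs he), fun e he f hf => h.2.1 e (hs he) f (hs hf),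
    fun e he f hf => h.2.2 e (hs he) f (hs hf)⟩

lemma z_bdd (M : Finset (Finset ℕ)) : BddAbove {k | ∃ K : Finset (Finset ℕ), K ⊆ M ∧
    IsClique 2 {pAABB, pABAB} K ∧ K.card = k} := by
  refine ⟨M.card, ?_⟩
  rintro k ⟨K, hK, _, rfl⟩
  exact Finset.card_le_card hK

lemma z_ge {M K : Finset (Finset ℕ)} (hs : K ⊆ M) (hK : NN K) :
    K.card ≤ zClique 2 {pAABB, pABAB} M :=
  le_csSup (z_bdd M) ⟨K, hs, (isClique_iff K).2 hK, rfl⟩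

lemma z_attained (M : Finset (Finset ℕ)) :
    ∃ K ⊆ M, NN K ∧ K.card = zClique 2 {pAABB, pABAB} M := by
  have hne : {k | ∃ K : Finset (Finset ℕ), K ⊆ M ∧
    IsClique 2 {pAABB, pABAB} K ∧ K.card = k}.Nonempty :=
    ⟨0, ∅, by simp, by rw [isClique_iff]; simp [NN], by simp⟩
  obtain ⟨K, h1, h2, h3⟩ := Nat.sSup_mem hne (z_bdd M)
  exact ⟨K, h1, (isClique_iff K).1 h2, h3⟩

lemma rank_inj {B : Finset ℕ} {x y : ℕ} (hx : x ∈ B) (hy : y ∈ B)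
    (h : (B.filter (· < x)).card = (B.filter (· < y)).card) : x = y := by
  have key : ∀ {x y : ℕ}, x ∈ B → x < y → (B.filter (· < x)).card < (B.filter (· < y)).card := by
    intro x y hx hxy
    apply Finset.card_lt_card
    refine (Finset.ssubset_iff_of_subset ?_).2 ⟨x, by simp [hx, hxy], by simp⟩
    intro z hz
    simp at hz ⊢
    exact ⟨hz.1, hz.2.trans hxy⟩
  rcases lt_trichotomy x y with h' | h' | h'
  · have := key hx h'; omega
  · exact h'
  · have := key hy h'; omega

lemma rank_inj' {B : Finset ℕ} {x y : ℕ} (hx : x ∈ B) (hy : y ∈ B)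
    (h : (B.filter (x < ·)).card = (B.filter (y < ·)).card) : x = y := by
  have key : ∀ {x y : ℕ}, y ∈ B → x < y → (B.filter (y < ·)).card < (B.filter (x < ·)).card := by
    intro x y hx hxy
    apply Finset.card_lt_card
    refine (Finset.ssubset_iff_of_subset ?_).2 ⟨y, by simp [hx, hxy], by simp⟩
    intro z hz
    simp at hz ⊢
    exact ⟨hz.1, hxy.trans hz.2⟩
  rcases lt_trichotomy x y with h' | h' | h'
  · have := key hy h'; omega
  · exact h'
  · have := key hx h'; omega

lemma NN.rank {K : Finset (Finset ℕ)} (h : NN K) {e : Finset ℕ} (he : e ∈ K) :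
    ((K.image loE).filter (· < loE e)).card = ((K.image hiE).filter (· < hiE e)).card := by
  rw [Finset.filter_image, Finset.filter_image, Finset.card_image_of_injOn,
    Finset.card_image_of_injOn]
  · congr 1
    apply Finset.filter_congr
    intro f hf
    by_cases hfe : f = e
    · subst hfe; simp
    · have := h.2.2 f hf e he hfe
      unfold Lt2 at this
      omega
  · intro f hf g hg hfg
    by_contra hne
    have := h.2.2 f (Finset.mem_filter.1 hf).1 g (Finset.mem_filter.1 hg).1 hne
    unfold Lt2 at this
    omega
  · intro f hf g hg hfg
    by_contra hne
    have := h.2.2 f (Finset.mem_filter.1 hf).1 g (Finset.mem_filter.1 hg).1 hne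
    unfold Lt2 at this
    omega

lemma NN.sub {K K' : Finset (Finset ℕ)} (h : NN K) (h' : NN K')
    (hl : K.image loE = K'.image loE) (hh : K.image hiE = K'.image hiE) : K ⊆ K' := by
  intro e he
  have : loE e ∈ K'.image loE := by rw [← hl]; exact Finset.mem_image_of_mem _ he
  obtain ⟨f, hf, hfe⟩ := Finset.mem_image.1 this
  have r1 := h.rank he
  have r2 := h'.rank hf
  rw [hfe, ← hl, r1, hh] at r2
  have heq : hiE e = hiE f := rank_inj (B := K'.image hiE)
    (by rw [← hh]; exact Finset.mem_image_of_mem _ he) (Finset.mem_image_of_mem _ hf) r2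
  have e1 := (edge_form (h.1 e he)).2
  have e2 := (edge_form (h'.1 f hf)).2
  rw [hfe, ← heq, ← e1] at e2
  rwa [← e2]

lemma NN.lo_inj {K : Finset (Finset ℕ)} (h : NN K) : Set.InjOn loE (K : Set (Finset ℕ)) := by
  intro f hf g hg hfg
  by_contra hne
  have := h.2.2 f hf g hg hne
  unfold Lt2 at this
  omega

lemma NN.hi_inj {K : Finset (Finset ℕ)} (h : NN K) : Set.InjOn hiE (K : Set (Finset ℕ)) := by
  intro f hf g hg hfg
  by_contra hne
  have := h.2.2 f hf g hg hne
  unfold Lt2 at this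
  omega

lemma count_upper (n k : ℕ) :
    ((PM (Finset.Icc 1 (2 * n))).filter
      (fun M => k ≤ zClique 2 {pAABB, pABAB} M)).card ≤ (2 * n).choose k ^ 2 * dF (n - k) := by
  set V := Finset.Icc 1 (2 * n) with hV
  have hVc : V.card = 2 * n := by simp [hV]
  set 𝒦 := V.powerset.powerset.filter (fun K => NN K ∧ K.card = k) with h𝒦
  have hsub : ((PM V).filter (fun M => k ≤ zClique 2 {pAABB, pABAB} M)) ⊆
      𝒦.biUnion (fun K => (PM V).filter (fun M => K ⊆ M)) := by
    intro M hM
    obtain ⟨hM, hk⟩ := Finset.mem_filter.1 hM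
    obtain ⟨K, h1, h2, h3⟩ := z_attained M
    rw [← h3] at hk
    obtain ⟨K', h4, h5⟩ := Finset.exists_subset_card_eq hk
    rw [Finset.mem_biUnion]
    refine ⟨K', ?_, Finset.mem_filter.2 ⟨hM, h4.trans h1⟩⟩
    rw [h𝒦, Finset.mem_filter]
    refine ⟨?_, h2.mono h4, h5⟩
    have := (Finset.mem_filter.1 hM).1
    rw [Finset.mem_powerset] at this ⊢
    exact (h4.trans h1).trans this
  have hcard : 𝒦.card ≤ (2 * n).choose k ^ 2 := by
    have : (V.powersetCard k ×ˢ V.powersetCard k).card = (2 * n).choose k ^ 2 := by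
      rw [Finset.card_product, Finset.card_powersetCard, hVc, sq]
    rw [← this]
    apply Finset.card_le_card_of_injOn (fun K => (K.image loE, K.image hiE))
    · intro K hK
      rw [Finset.mem_coe, h𝒦, Finset.mem_filter, Finset.mem_powerset] at hK
      obtain ⟨h1, h2, h3⟩ := hK
      have hmem : ∀ e ∈ K, loE e ∈ V ∧ hiE e ∈ V := by
        intro e he
        have hs := Finset.mem_powerset.1 (h1 he)
        have hf := (edge_form (h2.1 e he)).2
        constructor
        · exact hs ((Finset.ext_iff.1 hf (loE e)).2 (by simp))
        · exact hs ((Finset.ext_iff.1 hf (hiE e)).2 (by simp))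
      rw [Finset.mem_coe, Finset.mem_product, Finset.mem_powersetCard, Finset.mem_powersetCard]
      refine ⟨⟨?_, ?_⟩, ?_, ?_⟩
      · intro x hx
        obtain ⟨e, he, rfl⟩ := Finset.mem_image.1 hx
        exact (hmem e he).1
      · rw [Finset.card_image_of_injOn h2.lo_inj, h3]
      · intro x hx
        obtain ⟨e, he, rfl⟩ := Finset.mem_image.1 hx
        exact (hmem e he).2
      · rw [Finset.card_image_of_injOn h2.hi_inj, h3]
    · intro K hK K' hK' heq
      rw [Finset.mem_coe, h𝒦, Finset.mem_filter] at hK hK'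
      obtain ⟨q1, q2⟩ := Prod.mk.inj heq
      exact Finset.Subset.antisymm (hK.2.1.sub hK'.2.1 q1 q2)
        (hK'.2.1.sub hK.2.1 q1.symm q2.symm)
  refine (Finset.card_le_card hsub).trans ?_
  refine (Finset.card_biUnion_le_card_mul _ _ (dF (n - k)) ?_).trans
    (Nat.mul_le_mul_right _ hcard)
  intro K hK
  rw [h𝒦, Finset.mem_filter, Finset.mem_powerset] at hK
  obtain ⟨h1, h2, h3⟩ := hK
  have hKV : K.biUnion id ⊆ V := by
    rw [Finset.biUnion_subset]
    intro e he
    exact Finset.mem_powerset.1 (h1 he)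
  rw [card_sup h2.1 h2.2.1 hKV]
  apply le_of_eq
  apply card_PM
  rw [Finset.card_sdiff_of_subset hKV, card_biUnion_edges h2.1 h2.2.1, h3, hVc]
  omega

lemma Lt2.trans {e f g : Finset ℕ} (h : Lt2 e f) (h' : Lt2 f g) : Lt2 e g :=
  ⟨h.1.trans h'.1, h.2.trans h'.2⟩

/-- Chains in `M` with top element `e`. -/
noncomputable def chainsTo (M : Finset (Finset ℕ)) (e : Finset ℕ) : Finset (Finset (Finset ℕ)) :=
  M.powerset.filter (fun K => NN K ∧ e ∈ K ∧ ∀ f ∈ K, f = e ∨ Lt2 f e)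

/-- The height of `e` in `M`. -/
noncomputable def hgt (M : Finset (Finset ℕ)) (e : Finset ℕ) : ℕ :=
  (chainsTo M e).sup Finset.card

lemma singleton_chain {M : Finset (Finset ℕ)} {e : Finset ℕ} (he : e ∈ M) (hc : e.card = 2) :
    {e} ∈ chainsTo M e := by
  unfold chainsTo
  rw [Finset.mem_filter]
  refine ⟨by simpa using he, ⟨by simpa using hc, by simp, by simp⟩, by simp, by simp⟩

lemma hgt_pos {M : Finset (Finset ℕ)} {e : Finset ℕ} (he : e ∈ M) (hc : e.card = 2) :
    1 ≤ hgt M e := by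
  have := Finset.le_sup (f := Finset.card) (singleton_chain he hc)
  rw [Finset.card_singleton] at this
  exact this

lemma hgt_le (M : Finset (Finset ℕ)) (e : Finset ℕ) :
    hgt M e ≤ zClique 2 {pAABB, pABAB} M := by
  apply Finset.sup_le
  intro K hK
  unfold chainsTo at hK
  rw [Finset.mem_filter, Finset.mem_powerset] at hK
  exact z_ge hK.1 hK.2.1

lemma hgt_lt {M : Finset (Finset ℕ)} (h1 : ∀ e ∈ M, e.card = 2)
    (h2 : ∀ e ∈ M, ∀ f ∈ M, e ≠ f → Disjoint e f) {e f : Finset ℕ} (he : e ∈ M) (hf : f ∈ M)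
    (h : Lt2 e f) : hgt M e < hgt M f := by
  obtain ⟨K, hK, hKe⟩ := Finset.exists_mem_eq_sup (chainsTo M e)
    ⟨_, singleton_chain he (h1 e he)⟩ Finset.card
  have hK' := hK
  unfold chainsTo at hK'
  rw [Finset.mem_filter, Finset.mem_powerset] at hK'
  obtain ⟨a1, a2, a3, a4⟩ := hK'
  have hlt : ∀ g ∈ K, Lt2 g f := by
    intro g hg
    rcases a4 g hg with rfl | hh
    · exact h
    · exact hh.trans h
  have hfK : f ∉ K := fun hh => lt_irrefl _ (hlt f hh).1
  have hins : insert f K ⊆ M := Finset.insert_subset hf a1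
  have hmem : insert f K ∈ chainsTo M f := by
    unfold chainsTo
    rw [Finset.mem_filter, Finset.mem_powerset]
    refine ⟨hins, ⟨fun e he => h1 e (hins he), fun e he f hf => h2 e (hins he) f (hins hf), ?_⟩,
      Finset.mem_insert_self _ _, ?_⟩
    · intro x hx y hy hne
      rcases Finset.mem_insert.1 hx with hx1 | hx1 <;>
        rcases Finset.mem_insert.1 hy with hy1 | hy1
      · exact absurd (hx1.trans hy1.symm) hne
      · rw [hx1]; exact Or.inr (hlt y hy1)
      · rw [hy1]; exact Or.inl (hlt x hx1)
      · exact a2.2.2 x hx1 y hy1 hne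
    · intro x hx
      rcases Finset.mem_insert.1 hx with rfl | hx
      · exact Or.inl rfl
      · exact Or.inr (hlt x hx)
  have := Finset.le_sup (f := Finset.card) hmem
  rw [Finset.card_insert_of_notMem hfK] at this
  have e1 : hgt M e = K.card := hKe
  rw [e1]
  exact this

lemma card_filter_pair {c d : ℕ} (h : c ≠ d) (P : ℕ → Prop) [DecidablePred P] :
    (({c, d} : Finset ℕ).filter P).card = (if P c then 1 else 0) + (if P d then 1 else 0) := by
  rw [Finset.card_filter, Finset.sum_pair h]

lemma nest_rank {F : Finset (Finset ℕ)} (h1 : ∀ e ∈ F, e.card = 2)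
    (h2 : ∀ e ∈ F, ∀ f ∈ F, e ≠ f → Disjoint e f)
    (h3 : ∀ e ∈ F, ∀ f ∈ F, ¬ Lt2 e f) {p q : ℕ} (hpq : p ≠ q) (he : {p, q} ∈ F) :
    ((F.biUnion id).filter (· < p)).card = ((F.biUnion id).filter (q < ·)).card := by
  rw [Finset.filter_biUnion, Finset.filter_biUnion, Finset.card_biUnion, Finset.card_biUnion]
  · apply Finset.sum_congr rfl
    intro f hf
    obtain ⟨c, d, hcd, rfl⟩ := exists_pair (h1 f hf)
    simp only [id]
    rw [card_filter_pair hcd.ne, card_filter_pair hcd.ne]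
    have n1 := h3 _ he _ hf
    have n2 := h3 _ hf _ he
    have hdj := h2 _ he _ hf
    by_cases heq : ({p, q} : Finset ℕ) = {c, d}
    · have hc : c ∈ ({p, q} : Finset ℕ) := by rw [heq]; simp
      have hd : d ∈ ({p, q} : Finset ℕ) := by rw [heq]; simp
      simp only [Finset.mem_insert, Finset.mem_singleton] at hc hd
      split_ifs <;> omega
    · have hdj := hdj heq
      simp only [Finset.disjoint_insert_left, Finset.disjoint_singleton_left, Finset.mem_insert,
        Finset.mem_singleton, not_or] at hdj
      unfold Lt2 at n1 n2
      rw [(lohi_pair hcd).1, (lohi_pair hcd).2] at n1 n2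
      rcases lt_or_gt_of_ne hpq with hh | hh
      · rw [(lohi_pair hh).1, (lohi_pair hh).2] at n1 n2
        split_ifs <;> omega
      · rw [Finset.pair_comm, (lohi_pair hh).1, (lohi_pair hh).2] at n1 n2
        split_ifs <;> omega
  · intro e he f hf hne
    exact Finset.disjoint_filter_filter (h2 e he f hf hne)
  · intro e he f hf hne
    exact Finset.disjoint_filter_filter (h2 e he f hf hne)

/-- Colour of a vertex: the height of its edge. -/
noncomputable def colr (M : Finset (Finset ℕ)) (x : ℕ) : ℕ := (M.filter (x ∈ ·)).sup (hgt M)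

lemma colr_eq {M : Finset (Finset ℕ)} (h2 : ∀ e ∈ M, ∀ f ∈ M, e ≠ f → Disjoint e f)
    {e : Finset ℕ} (he : e ∈ M) {x : ℕ} (hx : x ∈ e) : colr M x = hgt M e := by
  have : M.filter (x ∈ ·) = {e} := by
    ext f
    rw [Finset.mem_filter, Finset.mem_singleton]
    constructor
    · rintro ⟨hf, hxf⟩
      by_contra hne
      exact Finset.disjoint_left.1 (h2 f hf e he hne) hxf hx
    · rintro rfl
      exact ⟨he, hx⟩
  unfold colr
  rw [this, Finset.sup_singleton]

lemma colr_rank {V : Finset ℕ} {M : Finset (Finset ℕ)} (hM : M ∈ PM V) {p q : ℕ} (hpq : p ≠ q)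
    (he : {p, q} ∈ M) :
    ((V.filter (fun x => colr M x = colr M p)).filter (· < p)).card =
      ((V.filter (fun x => colr M x = colr M p)).filter (q < ·)).card := by
  obtain ⟨h1, h2, h3⟩ := mem_PM.1 hM
  have hp : colr M p = hgt M {p, q} := colr_eq h2 he (by simp)
  rw [hp]
  have hC : V.filter (fun x => colr M x = hgt M {p, q}) =
      (M.filter (fun f => hgt M f = hgt M {p, q})).biUnion id := by
    ext x
    rw [Finset.mem_filter, Finset.mem_biUnion]
    constructor
    · rintro ⟨hx, hc⟩
      rw [← h3, Finset.mem_biUnion] at hx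
      obtain ⟨f, hf, hxf⟩ := hx
      exact ⟨f, Finset.mem_filter.2 ⟨hf, by rw [← hc, colr_eq h2 hf hxf]⟩, hxf⟩
    · rintro ⟨f, hf, hxf⟩
      obtain ⟨hf, hh⟩ := Finset.mem_filter.1 hf
      refine ⟨?_, by rw [← hh, colr_eq h2 hf hxf]⟩
      rw [← h3, Finset.mem_biUnion]
      exact ⟨f, hf, hxf⟩
  rw [hC]
  apply nest_rank
  · intro e he
    exact h1 e (Finset.mem_filter.1 he).1
  · intro e he f hf
    exact h2 e (Finset.mem_filter.1 he).1 f (Finset.mem_filter.1 hf).1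
  · intro e he f hf hlt
    have := hgt_lt h1 h2 (Finset.mem_filter.1 he).1 (Finset.mem_filter.1 hf).1 hlt
    rw [(Finset.mem_filter.1 he).2, (Finset.mem_filter.1 hf).2] at this
    exact lt_irrefl _ this
  · exact hpq
  · exact Finset.mem_filter.2 ⟨he, rfl⟩

lemma colr_sub {V : Finset ℕ} {M M' : Finset (Finset ℕ)} (hM : M ∈ PM V) (hM' : M' ∈ PM V)
    (h : ∀ x ∈ V, colr M x = colr M' x) : M ⊆ M' := by
  intro e he
  obtain ⟨h1, h2, h3⟩ := mem_PM.1 hM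
  obtain ⟨h1', h2', h3'⟩ := mem_PM.1 hM'
  obtain ⟨a, b, hab, rfl⟩ := exists_pair (h1 e he)
  have haV : a ∈ V := by rw [← h3, Finset.mem_biUnion]; exact ⟨_, he, by simp⟩
  have hbV : b ∈ V := by rw [← h3, Finset.mem_biUnion]; exact ⟨_, he, by simp⟩
  have : ∃ q, a ≠ q ∧ {a, q} ∈ M' := by
    have ha' := haV
    rw [← h3', Finset.mem_biUnion] at ha'
    obtain ⟨f, hf, haf⟩ := ha'
    obtain ⟨c, d, hcd, rfl⟩ := exists_pair (h1' f hf)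
    simp only [id, Finset.mem_insert, Finset.mem_singleton] at haf
    rcases haf with rfl | rfl
    · exact ⟨d, hcd.ne, hf⟩
    · exact ⟨c, hcd.ne', by rwa [Finset.pair_comm]⟩
  obtain ⟨q, haq, hq⟩ := this
  have hqV : q ∈ V := by rw [← h3', Finset.mem_biUnion]; exact ⟨_, hq, by simp⟩
  have r1 := colr_rank hM hab.ne he
  have r2 := colr_rank hM' haq hq
  have hCC : V.filter (fun x => colr M' x = colr M' a) =
      V.filter (fun x => colr M x = colr M a) := by
    apply Finset.filter_congr
    intro x hx
    rw [h x hx, h a haV]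
  rw [hCC, r1] at r2
  have hb : colr M b = colr M a := by
    rw [colr_eq h2 he (x := b) (by simp), colr_eq h2 he (x := a) (by simp)]
  have hqc : colr M q = colr M a := by
    rw [h q hqV, h a haV, colr_eq h2' hq (x := q) (by simp), colr_eq h2' hq (x := a) (by simp)]
  have : b = q := rank_inj' (Finset.mem_filter.2 ⟨hbV, hb⟩) (Finset.mem_filter.2 ⟨hqV, hqc⟩) r2
  rwa [this]

lemma count_lower (n k : ℕ) :
    ((PM (Finset.Icc 1 (2 * n))).filter
      (fun M => zClique 2 {pAABB, pABAB} M ≤ k)).card ≤ k ^ (2 * n) := by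
  set V := Finset.Icc 1 (2 * n) with hV
  have hVc : V.card = 2 * n := by simp [hV]
  have hcard : (V.pi (fun _ => Finset.Icc 1 k)).card = k ^ (2 * n) := by
    rw [Finset.card_pi]; simp [hVc]
  rw [← hcard]
  apply Finset.card_le_card_of_injOn (fun M => fun x _ => colr M x)
  · intro M hM
    obtain ⟨hM, hz⟩ := Finset.mem_filter.1 (Finset.mem_coe.1 hM)
    obtain ⟨h1, h2, h3⟩ := mem_PM.1 hM
    rw [Finset.mem_coe, Finset.mem_pi]
    intro x hx
    rw [← h3, Finset.mem_biUnion] at hx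
    obtain ⟨f, hf, hxf⟩ := hx
    change colr M x ∈ _
    rw [colr_eq h2 hf hxf, Finset.mem_Icc]
    exact ⟨hgt_pos hf (h1 f hf), (hgt_le M f).trans hz⟩
  · intro M hM M' hM' heq
    obtain ⟨hM, -⟩ := Finset.mem_filter.1 (Finset.mem_coe.1 hM)
    obtain ⟨hM', -⟩ := Finset.mem_filter.1 (Finset.mem_coe.1 hM')
    have hx : ∀ x ∈ V, colr M x = colr M' x := fun x hx => congrFun (congrFun heq x) hx
    exact Finset.Subset.antisymm (colr_sub hM hM' hx)
      (colr_sub hM' hM (fun x h => (hx x h).symm))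

lemma dF_pos (n : ℕ) : 0 < dF n := by
  induction n with
  | zero => simp [dF]
  | succ n ih => simp only [dF]; positivity

lemma fact_le_dF (n : ℕ) : n.factorial ≤ dF n := by
  induction n with
  | zero => simp [dF]
  | succ n ih =>
    simp only [dF, Nat.factorial_succ]
    exact Nat.mul_le_mul (by omega) ih

lemma dF_ratio (n : ℕ) : ∀ k, 2 * k ≤ n → n ^ k * dF (n - k) ≤ dF n := by
  intro k
  induction k with
  | zero => simp
  | succ k ih =>
    intro hk
    refine le_trans ?_ (ih (by omega))
    obtain ⟨m, hm⟩ : ∃ m, n - k = m + 1 := ⟨n - k - 1, by omega⟩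
    have h1 : n - (k + 1) = m := by omega
    rw [hm, h1, pow_succ, mul_assoc]
    simp only [dF]
    apply Nat.mul_le_mul_left
    apply Nat.mul_le_mul_right
    omega

lemma pow_le_fact (n : ℕ) : (n : ℝ) ^ n ≤ n.factorial * 3 ^ n := by
  have h := Real.pow_div_factorial_le_exp (n : ℝ) (Nat.cast_nonneg n) n
  have hf : (0 : ℝ) < n.factorial := by exact_mod_cast Nat.factorial_pos n
  rw [div_le_iff₀ hf] at h
  have h3 : Real.exp (n : ℝ) ≤ 3 ^ n := by
    have : Real.exp (n : ℝ) = Real.exp 1 ^ n := by rw [← Real.exp_nat_mul, mul_one]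
    rw [this]
    apply pow_le_pow_left₀ (Real.exp_pos 1).le
    linarith [Real.exp_one_lt_d9]
  calc (n : ℝ) ^ n ≤ Real.exp n * n.factorial := h
    _ ≤ 3 ^ n * n.factorial := by gcongr
    _ = _ := mul_comm _ _

lemma bound_lower (n k : ℕ) (hk : (k : ℝ) ≤ (1 / 3) * Real.sqrt n) :
    ((k ^ (2 * n) : ℕ) : ℝ) ≤ (1 / 3) ^ n * (dF n : ℝ) := by
  have h1 : (k : ℝ) ^ 2 ≤ (1 / 9) * n := by
    have := pow_le_pow_left₀ (Nat.cast_nonneg k : (0 : ℝ) ≤ k) hk 2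
    rw [mul_pow, Real.sq_sqrt (Nat.cast_nonneg n)] at this
    linarith
  have h2 : (n.factorial : ℝ) ≤ dF n := by exact_mod_cast fact_le_dF n
  calc ((k ^ (2 * n) : ℕ) : ℝ) = ((k : ℝ) ^ 2) ^ n := by push_cast; rw [pow_mul]
    _ ≤ ((1 / 9) * n) ^ n := by gcongr
    _ = (1 / 9) ^ n * (n : ℝ) ^ n := mul_pow _ _ _
    _ ≤ (1 / 9) ^ n * (n.factorial * 3 ^ n) := by gcongr; exact pow_le_fact n
    _ = (1 / 9 * 3) ^ n * n.factorial := by rw [mul_pow]; ring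
    _ = (1 / 3) ^ n * n.factorial := by norm_num
    _ ≤ _ := by gcongr

lemma bound_upper (n k : ℕ) (hn : 0 < n) (hk : 10 * Real.sqrt n ≤ k) (hkn : 2 * k ≤ n) :
    (((2 * n).choose k ^ 2 * dF (n - k) : ℕ) : ℝ) ≤ (1 / 2) ^ k * (dF n : ℝ) := by
  have hn' : (0 : ℝ) < n := by exact_mod_cast hn
  have h1 : 100 * (n : ℝ) ≤ (k : ℝ) ^ 2 := by
    have := pow_le_pow_left₀ (by positivity) hk 2
    rw [mul_pow, Real.sq_sqrt (Nat.cast_nonneg n)] at this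
    linarith
  have hf : (0 : ℝ) < k.factorial := by exact_mod_cast Nat.factorial_pos k
  have h2 : ((2 * n).choose k : ℝ) * k.factorial ≤ (2 * n) ^ k := by
    have := Nat.choose_le_pow_div (α := ℝ) k (2 * n)
    rw [le_div_iff₀ hf] at this
    exact_mod_cast this
  have h3 : (n : ℝ) ^ k * dF (n - k) ≤ dF n := by exact_mod_cast dF_ratio n k hkn
  have h4 := pow_le_fact k
  push_cast
  set X : ℝ := ((2 * n).choose k : ℝ) with hX
  have hX0 : 0 ≤ X := by positivity
  have h5 : X * (k : ℝ) ^ k ≤ (6 * n) ^ k := by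
    calc X * (k : ℝ) ^ k ≤ X * (k.factorial * 3 ^ k) := by gcongr
      _ = (X * k.factorial) * 3 ^ k := by ring
      _ ≤ (2 * n) ^ k * 3 ^ k := by gcongr
      _ = (6 * n) ^ k := by rw [← mul_pow]; ring
  have h6 : X ^ 2 * (100 * n) ^ k ≤ (36 * n) ^ k * (n : ℝ) ^ k := by
    calc X ^ 2 * (100 * n) ^ k ≤ X ^ 2 * ((k : ℝ) ^ 2) ^ k := by gcongr
      _ = (X * (k : ℝ) ^ k) ^ 2 := by rw [mul_pow, ← pow_mul, ← pow_mul, mul_comm 2 k]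
      _ ≤ ((6 * n) ^ k) ^ 2 := by gcongr
      _ = ((6 * n) ^ 2) ^ k := by rw [← pow_mul, ← pow_mul, mul_comm k 2]
      _ = (36 * n) ^ k * (n : ℝ) ^ k := by rw [← mul_pow]; congr 1; ring
  have hp : (0 : ℝ) < (100 * n) ^ k := by positivity
  rw [← mul_le_mul_iff_left₀ hp]
  calc X ^ 2 * (dF (n - k) : ℝ) * (100 * n) ^ k = X ^ 2 * (100 * n) ^ k * dF (n - k) := by ring
    _ ≤ (36 * n) ^ k * (n : ℝ) ^ k * dF (n - k) := by gcongr
    _ = (36 * n) ^ k * ((n : ℝ) ^ k * dF (n - k)) := by ring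
    _ ≤ (50 * n) ^ k * dF n := by gcongr; norm_num
    _ = (1 / 2 * (100 * n)) ^ k * dF n := by ring
    _ = _ := by rw [mul_pow]; ring

/-- **Theorem.** A.a.s. `z_{{AABB, ABAB}}(RM_n^(2)) = Θ(n^(1/2))`. -/
theorem aas_P1_pair :
    ∃ c₁ c₂ : ℝ, 0 < c₁ ∧ 0 < c₂ ∧
      Filter.Tendsto
        (fun n : ℕ => prob 2 n (fun M =>
          c₁ * (n : ℝ) ^ ((1 : ℝ) / 2) ≤ (zClique 2 {pAABB, pABAB} M : ℝ) ∧
          (zClique 2 {pAABB, pABAB} M : ℝ) ≤ c₂ * (n : ℝ) ^ ((1 : ℝ) / 2)))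
        Filter.atTop (nhds 1) := by
  refine ⟨1 / 3, 10, by norm_num, by norm_num, ?_⟩
  set K : ℕ → ℕ := fun n => ⌊10 * Real.sqrt n⌋₊ + 1 with hK
  have hKt : Filter.Tendsto K Filter.atTop Filter.atTop := by
    refine (Filter.tendsto_add_atTop_nat 1).comp ?_
    apply tendsto_nat_floor_atTop.comp
    apply Filter.Tendsto.const_mul_atTop (by norm_num)
    exact Real.tendsto_sqrt_atTop.comp tendsto_natCast_atTop_atTop
  have hlim : Filter.Tendsto (fun n : ℕ => (1 : ℝ) - ((1 / 3) ^ n + (1 / 2) ^ (K n)))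
      Filter.atTop (nhds 1) := by
    have t1 : Filter.Tendsto (fun n : ℕ => ((1 : ℝ) / 3) ^ n) Filter.atTop (nhds 0) :=
      tendsto_pow_atTop_nhds_zero_of_lt_one (by norm_num) (by norm_num)
    have t2 : Filter.Tendsto (fun n : ℕ => ((1 : ℝ) / 2) ^ (K n)) Filter.atTop (nhds 0) :=
      (tendsto_pow_atTop_nhds_zero_of_lt_one (by norm_num) (by norm_num)).comp hKt
    simpa using (t1.add t2).const_sub 1
  refine tendsto_of_tendsto_of_tendsto_of_le_of_le' hlim tendsto_const_nhds ?_ ?_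
  · filter_upwards [Filter.eventually_ge_atTop 1000] with n hn
    unfold prob
    rw [families_eq]
    have hN : (PM (Finset.Icc 1 (2 * n))).card = dF n := card_PM n _ (by simp)
    set k₁ := ⌊(1 / 3) * Real.sqrt n⌋₊ with hk₁
    have hD : (0 : ℝ) < dF n := by exact_mod_cast dF_pos n
    have b1 := bound_lower n k₁ (Nat.floor_le (by positivity))
    have hKn : 2 * K n ≤ n := by
      have hs : (31 : ℝ) ≤ Real.sqrt n := by
        apply Real.le_sqrt_of_sq_le
        have : (1000 : ℝ) ≤ n := by exact_mod_cast hn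
        linarith
      have hsq := Real.sq_sqrt (Nat.cast_nonneg n : (0 : ℝ) ≤ n)
      have hfl : (⌊10 * Real.sqrt n⌋₊ : ℝ) ≤ 10 * Real.sqrt n := Nat.floor_le (by positivity)
      have : ((2 * K n : ℕ) : ℝ) ≤ (n : ℝ) := by
        simp only [hK]
        push_cast
        nlinarith
      exact_mod_cast this
    have b2 := bound_upper n (K n) (by omega) (by
      simp only [hK]; push_cast; exact (Nat.lt_floor_add_one _).le) hKn
    have c1 : (((PM (Finset.Icc 1 (2 * n))).filter
        (fun M => zClique 2 {pAABB, pABAB} M ≤ k₁)).card : ℝ) ≤ (1 / 3) ^ n * (dF n : ℝ) :=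
      le_trans (by exact_mod_cast count_lower n k₁) b1
    have c2 : (((PM (Finset.Icc 1 (2 * n))).filter
        (fun M => K n ≤ zClique 2 {pAABB, pABAB} M)).card : ℝ) ≤ (1 / 2) ^ (K n) * (dF n : ℝ) :=
      le_trans (by exact_mod_cast count_upper n (K n)) b2
    rw [hN, le_div_iff₀ hD]
    set A := (PM (Finset.Icc 1 (2 * n))).filter (fun M =>
          1 / 3 * (n : ℝ) ^ ((1 : ℝ) / 2) ≤ (zClique 2 {pAABB, pABAB} M : ℝ) ∧
          (zClique 2 {pAABB, pABAB} M : ℝ) ≤ 10 * (n : ℝ) ^ ((1 : ℝ) / 2)) with hA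
    have hcov : PM (Finset.Icc 1 (2 * n)) ⊆ A ∪ ((PM (Finset.Icc 1 (2 * n))).filter
        (fun M => zClique 2 {pAABB, pABAB} M ≤ k₁) ∪ (PM (Finset.Icc 1 (2 * n))).filter
        (fun M => K n ≤ zClique 2 {pAABB, pABAB} M)) := by
      intro M hM
      simp only [hA, Finset.mem_union, Finset.mem_filter, hM, true_and]
      rw [← Real.sqrt_eq_rpow]
      by_cases q1 : 1 / 3 * Real.sqrt n ≤ (zClique 2 {pAABB, pABAB} M : ℝ)
      · by_cases q2 : (zClique 2 {pAABB, pABAB} M : ℝ) ≤ 10 * Real.sqrt n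
        · exact Or.inl ⟨q1, q2⟩
        · right; right
          push Not at q2
          exact (Nat.floor_lt (by positivity)).2 q2
      · right; left
        push Not at q1
        exact Nat.le_floor q1.le
    have hcc := (Finset.card_le_card hcov).trans ((Finset.card_union_le _ _).trans
      (Nat.add_le_add_left (Finset.card_union_le _ _) _))
    rw [hN] at hcc
    have hcc' : (dF n : ℝ) ≤ A.card + (((PM (Finset.Icc 1 (2 * n))).filter
        (fun M => zClique 2 {pAABB, pABAB} M ≤ k₁)).card + ((PM (Finset.Icc 1 (2 * n))).filter
        (fun M => K n ≤ zClique 2 {pAABB, pABAB} M)).card) := by exact_mod_cast hcc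
    have hfin : (1 - ((1 / 3) ^ n + (1 / 2) ^ K n)) * (dF n : ℝ) ≤ A.card := by linarith
    refine hfin.trans (le_of_eq ?_)
    rw [hA]
    congr!
  · filter_upwards with n
    unfold prob
    apply div_le_one_of_le₀
    · exact_mod_cast Finset.card_le_card (Finset.filter_subset _ _)
    · positivity
end

section
/- For r ≥ 2, let 𝒫 be a set of r-patterns, and suppose there exist constants C > 0 and 0 ≤ x < r such that a_𝒫(k) ≤ C^k · k^(kx) for all k ≥ 2. Then there exists a constant C'' > 0 such that the probability that z_𝒫(RM_n^(r)) ≤ C''·n^(1/(r−x)) tends to 1 as n → ∞. -/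
open Finset
open scoped Classical

open Finset
open scoped Classical

/-- All partitions of `V` into `r`-sets. -/
noncomputable def fmPV (r : ℕ) (V : Finset ℕ) : Finset (Finset (Finset ℕ)) :=
  (V.powerset.powerset).filter (fun M => (∀ e ∈ M, e.card = r) ∧
    (∀ e ∈ M, ∀ f ∈ M, e ≠ f → Disjoint e f) ∧ M.biUnion id = V)

theorem fm_mem_PV {r : ℕ} {V : Finset ℕ} {M : Finset (Finset ℕ)} :
    M ∈ fmPV r V ↔ (∀ e ∈ M, e.card = r) ∧
    (∀ e ∈ M, ∀ f ∈ M, e ≠ f → Disjoint e f) ∧ M.biUnion id = V := by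
  unfold fmPV
  rw [mem_filter]
  constructor
  · exact fun h => h.2
  · intro h
    refine ⟨?_, h⟩
    rw [mem_powerset]
    intro e he
    rw [mem_powerset, ← h.2.2]
    exact subset_biUnion_of_mem id he

theorem fm_card_biUnion {r : ℕ} {M : Finset (Finset ℕ)} (h1 : ∀ e ∈ M, e.card = r)
    (h2 : ∀ e ∈ M, ∀ f ∈ M, e ≠ f → Disjoint e f) : (M.biUnion id).card = M.card * r := by
  have h := card_biUnion (s := M) (t := id) (fun e he f hf hef => h2 e he f hf hef)
  rw [h]
  exact sum_const_nat h1

theorem fm_matching_eq (r n : ℕ) (hr : 2 ≤ r) :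
    matchingFamilies r n = fmPV r (Icc 1 (r * n)) := by
  ext M
  rw [fm_mem_PV]
  unfold matchingFamilies
  rw [mem_filter]
  unfold IsOrderedMatching
  constructor
  · exact fun h => h.2.2
  · intro h
    have hc := fm_card_biUnion h.1 h.2.1
    rw [h.2.2, Nat.card_Icc, Nat.add_sub_cancel, mul_comm] at hc
    refine ⟨?_, (Nat.eq_of_mul_eq_mul_right (by omega) hc).symm, h⟩
    rw [mem_powerset]
    intro e he
    rw [mem_powerset, ← h.2.2]
    exact subset_biUnion_of_mem id he

/-- Number of partitions of `V` extending `K`. -/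
theorem fm_card_ext (r : ℕ) (hr : 2 ≤ r) (V : Finset ℕ) (K : Finset (Finset ℕ))
    (h1 : ∀ e ∈ K, e.card = r) (h2 : ∀ e ∈ K, ∀ f ∈ K, e ≠ f → Disjoint e f)
    (h3 : K.biUnion id ⊆ V) :
    ((fmPV r V).filter (fun M => K ⊆ M)).card = (fmPV r (V \ K.biUnion id)).card := by
  have key : ∀ M' ∈ fmPV r (V \ K.biUnion id), ∀ e ∈ M', ∀ f ∈ K, Disjoint e f := by
    intro M' hM' e he f hf
    rw [fm_mem_PV] at hM'
    have h4 : e ⊆ V \ K.biUnion id := by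
      rw [← hM'.2.2]; exact subset_biUnion_of_mem id he
    have h5 : f ⊆ K.biUnion id := subset_biUnion_of_mem id hf
    exact (disjoint_sdiff_self_left.mono_left h4).mono_right h5
  refine card_bij' (fun M _ => M \ K) (fun M _ => M ∪ K) ?_ ?_ ?_ ?_
  · intro M hM
    rw [mem_filter, fm_mem_PV] at hM
    obtain ⟨⟨a, b, c⟩, d⟩ := hM
    rw [fm_mem_PV]
    refine ⟨fun e he => a e (sdiff_subset he),
      fun e he f hf => b e (sdiff_subset he) f (sdiff_subset hf), ?_⟩
    ext v
    simp only [mem_biUnion, mem_sdiff, id, ← c]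
    constructor
    · rintro ⟨e, ⟨he, heK⟩, hv⟩
      refine ⟨⟨e, he, hv⟩, ?_⟩
      rintro ⟨f, hf, hvf⟩
      have hne : e ≠ f := by rintro rfl; exact heK hf
      exact (Finset.disjoint_left.mp (b e he f (d hf) hne)) hv hvf
    · rintro ⟨⟨e, he, hv⟩, hn⟩
      exact ⟨e, ⟨he, fun h => hn ⟨e, h, hv⟩⟩, hv⟩
  · intro M hM
    have hk := key M hM
    rw [fm_mem_PV] at hM
    obtain ⟨a, b, c⟩ := hM
    rw [mem_filter, fm_mem_PV]
    refine ⟨⟨?_, ?_, ?_⟩, subset_union_right⟩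
    · intro e he
      rcases mem_union.mp he with h | h
      · exact a e h
      · exact h1 e h
    · intro e he f hf hne
      rcases mem_union.mp he with h | h <;> rcases mem_union.mp hf with h' | h'
      · exact b e h f h' hne
      · exact hk e h f h'
      · exact (hk f h' e h).symm
      · exact h2 e h f h' hne
    · rw [union_biUnion, c, sdiff_union_of_subset h3]
  · intro M hM
    rw [mem_filter] at hM
    exact sdiff_union_of_subset hM.2
  · intro M hM
    have hk := key M hM
    rw [fm_mem_PV] at hM
    have : Disjoint M K := by
      rw [Finset.disjoint_left]
      intro e he heK
      have h := hk e he e heK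
      rw [disjoint_self_iff_empty] at h
      have := hM.1 e he
      rw [h, card_empty] at this
      omega
    exact union_sdiff_cancel_right this

theorem fm_count (r : ℕ) (hr : 2 ≤ r) (m : ℕ) : ∀ V : Finset ℕ, V.card = r * m →
    (fmPV r V).card * (m.factorial * r.factorial ^ m) = (r * m).factorial := by
  induction m with
  | zero =>
    intro V hV
    have : V = ∅ := by rw [← card_eq_zero]; simpa using hV
    subst this
    have : fmPV r ∅ = {∅} := by
      ext M
      rw [fm_mem_PV, mem_singleton]
      constructor
      · rintro ⟨a, b, c⟩
        rw [eq_empty_iff_forall_notMem]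
        intro e he
        have h : e ⊆ ∅ := by rw [← c]; exact subset_biUnion_of_mem id he
        have h' := a e he
        rw [subset_empty.mp h, card_empty] at h'
        omega
      · rintro rfl
        simp
    rw [this]; simp
  | succ m ih =>
    intro V hV
    have hsum : (m + 1) * (fmPV r V).card
        = ∑ e ∈ V.powersetCard r, ((fmPV r V).filter (fun M => e ∈ M)).card := by
      have h1 := sum_card_bipartiteAbove_eq_sum_card_bipartiteBelow
        (s := fmPV r V) (t := V.powersetCard r) (fun M e => e ∈ M)
      unfold bipartiteAbove bipartiteBelow at h1
      rw [← h1, mul_comm]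
      symm
      apply sum_const_nat
      intro M hM
      rw [fm_mem_PV] at hM
      have hc := fm_card_biUnion hM.1 hM.2.1
      rw [hM.2.2, hV, mul_comm] at hc
      rw [Nat.eq_of_mul_eq_mul_right (by omega) hc]
      congr 1
      ext e
      rw [mem_filter, mem_powersetCard]
      constructor
      · exact fun h => h.2
      · intro h
        refine ⟨⟨?_, hM.1 e h⟩, h⟩
        rw [← hM.2.2]; exact subset_biUnion_of_mem id h
    have hterm : ∀ e ∈ V.powersetCard r, ((fmPV r V).filter (fun M => e ∈ M)).card
        * (m.factorial * r.factorial ^ m) = (r * m).factorial := by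
      intro e he
      rw [mem_powersetCard] at he
      have := fm_card_ext r hr V {e} (by simpa using he.2) (by simp) (by simpa using he.1)
      simp only [singleton_subset_iff, singleton_biUnion, id] at this
      rw [this]
      apply ih
      rw [card_sdiff_of_subset he.1, hV, he.2, mul_add, mul_one, Nat.add_sub_cancel]
    have h2 : (m + 1) * (fmPV r V).card * (m.factorial * r.factorial ^ m)
        = (r * (m + 1)).choose r * (r * m).factorial := by
      rw [hsum, sum_mul, sum_congr rfl hterm, sum_const, card_powersetCard, hV, smul_eq_mul]
    have h3 := Nat.choose_mul_factorial_mul_factorial (n := r * (m + 1)) (k := r)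
      (Nat.le_mul_of_pos_right r (by omega))
    have h4 : r * (m + 1) - r = r * m := by rw [mul_add, mul_one, Nat.add_sub_cancel]
    rw [h4] at h3
    rw [← h3, Nat.factorial_succ, pow_succ]
    calc _ = (m + 1) * (fmPV r V).card * (m.factorial * r.factorial ^ m) * r.factorial := by ring
      _ = _ := by rw [h2]; ring

/-- Relabelling by rank. -/
theorem fm_rank (U : Finset ℕ) : ∃ φ : ℕ → ℕ, StrictMonoOn φ (U : Set ℕ) ∧
    U.image φ = Icc 1 U.card := by
  have hmono : StrictMonoOn (fun x => (U.filter (· ≤ x)).card) (U : Set ℕ) := by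
    intro a ha b hb hab
    apply card_lt_card
    rw [ssubset_iff_of_subset]
    · refine ⟨b, ?_, ?_⟩
      · rw [mem_filter]; exact ⟨hb, le_refl b⟩
      · rw [mem_filter]; intro h; omega
    · intro y hy
      rw [mem_filter] at hy ⊢
      exact ⟨hy.1, by omega⟩
  refine ⟨_, hmono, ?_⟩
  apply eq_of_subset_of_card_le
  · intro y hy
    rw [mem_image] at hy
    obtain ⟨a, ha, rfl⟩ := hy
    rw [mem_Icc]
    refine ⟨card_pos.mpr ⟨a, ?_⟩, card_le_card (filter_subset _ _)⟩
    rw [mem_filter]; exact ⟨ha, le_refl a⟩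
  · rw [card_image_of_injOn hmono.injOn]; simp

theorem fm_clique_transport {r : ℕ} {U : Finset ℕ} {φ : ℕ → ℕ}
    (hφ : StrictMonoOn φ (U : Set ℕ)) {e f : Finset ℕ} (he : e ⊆ U) (hf : f ⊆ U)
    {P : Finset (Finset ℕ)} (h : FormsPattern r e f P) :
    FormsPattern r (e.image φ) (f.image φ) P := by
  obtain ⟨ψ, h1, h2, h3⟩ := h
  set g := Function.invFunOn φ (U : Set ℕ) with hg
  have hgl : ∀ y ∈ U, g (φ y) = y := fun y hy => hφ.injOn.leftInvOn_invFunOn hy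
  have him : ∀ s : Finset ℕ, s ⊆ U → (s.image φ).image (ψ ∘ g) = s.image ψ := by
    intro s hs
    rw [image_image]
    apply image_congr
    intro y hy
    simp only [Function.comp]
    rw [hgl y (hs hy)]
  refine ⟨ψ ∘ g, ?_, ?_, ?_⟩
  · rw [← image_union]
    intro a ha b hb hab
    rw [mem_coe, mem_image] at ha hb
    obtain ⟨a, ha, rfl⟩ := ha
    obtain ⟨b, hb, rfl⟩ := hb
    have ha' := union_subset he hf ha
    have hb' := union_subset he hf hb
    simp only [Function.comp]
    rw [hgl a ha', hgl b hb']
    exact h1 ha hb ((hφ.lt_iff_lt ha' hb').mp hab)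
  · rw [← image_union, him _ (union_subset he hf), h2]
  · rw [him e he, him f hf, h3]

theorem fm_clique_on (r : ℕ) (hr : 2 ≤ r) (Ps : Set (Finset (Finset ℕ))) (k : ℕ) (U : Finset ℕ)
    (hU : U.card = r * k) :
    ((fmPV r U).filter (IsClique r Ps)).card ≤ cliqueCount r Ps k := by
  obtain ⟨φ, hφ, hφU⟩ := fm_rank U
  rw [hU] at hφU
  have hsub : ∀ M ∈ fmPV r U, ∀ e ∈ M, e ⊆ U := by
    intro M hM e he
    rw [fm_mem_PV] at hM
    rw [← hM.2.2]; exact subset_biUnion_of_mem id he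
  have hinj : Set.InjOn (fun e : Finset ℕ => e.image φ) {e | e ⊆ U} := by
    intro e he f hf hef
    have key : ∀ s : Finset ℕ, s ⊆ U → ∀ y ∈ U, (y ∈ s ↔ φ y ∈ s.image φ) := by
      intro s hs y hy
      rw [mem_image]
      constructor
      · exact fun h => ⟨y, h, rfl⟩
      · rintro ⟨z, hz, hzy⟩
        rwa [← hφ.injOn (hs hz) hy hzy]
    simp only at hef
    ext y
    constructor
    · intro hy
      rw [key f hf y (he hy), ← hef]; exact mem_image_of_mem _ hy
    · intro hy
      rw [key e he y (hf hy), hef]; exact mem_image_of_mem _ hy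
  unfold cliqueCount
  refine card_le_card_of_injOn (fun M => M.image (fun e => e.image φ)) ?_ ?_
  · intro M hM
    rw [mem_coe, mem_filter] at hM
    obtain ⟨hM, hcl⟩ := hM
    have hs := hsub M hM
    rw [fm_mem_PV] at hM
    obtain ⟨a, b, c⟩ := hM
    have hcardM : M.card = k := by
      have hc := fm_card_biUnion a b
      rw [c, hU, mul_comm] at hc
      exact (Nat.eq_of_mul_eq_mul_right (by omega) hc).symm
    have hcard : ∀ e ∈ M.image (fun e => e.image φ), e.card = r := by
      intro e he
      rw [mem_image] at he
      obtain ⟨e, he, rfl⟩ := he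
      rw [card_image_of_injOn (hφ.injOn.mono (by exact_mod_cast hs e he)), a e he]
    have hdis : ∀ e ∈ M.image (fun e => e.image φ), ∀ f ∈ M.image (fun e => e.image φ),
        e ≠ f → Disjoint e f := by
      intro e he f hf hne
      rw [mem_image] at he hf
      obtain ⟨e, he, rfl⟩ := he
      obtain ⟨f, hf, rfl⟩ := hf
      have hne' : e ≠ f := by rintro rfl; exact hne rfl
      have hd := b e he f hf hne'
      rw [Finset.disjoint_left]
      intro y hy hy'
      rw [mem_image] at hy hy'
      obtain ⟨u, hu, rfl⟩ := hy
      obtain ⟨v, hv, huv⟩ := hy'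
      have := hφ.injOn (hs f hf hv) (hs e he hu) huv
      subst this
      exact Finset.disjoint_left.mp hd hu hv
    have hun : (M.image (fun e => e.image φ)).biUnion id = Icc 1 (r * k) := by
      rw [← hφU, ← c, image_biUnion, biUnion_image]
      rfl
    rw [mem_coe, mem_filter]
    refine ⟨?_, ⟨?_, hcard, hdis, hun⟩, hcard, hdis, ?_⟩
    · rw [mem_powerset]
      intro e he
      rw [mem_powerset, ← hun]
      exact subset_biUnion_of_mem id he
    · rw [card_image_of_injOn (hinj.mono (fun e he => hs e he)), hcardM]
    · intro e he f hf hne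
      rw [mem_image] at he hf
      obtain ⟨e, he, rfl⟩ := he
      obtain ⟨f, hf, rfl⟩ := hf
      have hne' : e ≠ f := by rintro rfl; exact hne rfl
      obtain ⟨P, hP, hfp⟩ := hcl.2.2 e he f hf hne'
      exact ⟨P, hP, fm_clique_transport hφ (hs e he) (hs f hf) hfp⟩
  · intro M hM N hN hMN
    rw [mem_coe, mem_filter] at hM hN
    have hsM := hsub M hM.1
    have hsN := hsub N hN.1
    simp only at hMN
    ext e
    constructor
    · intro he
      have : e.image φ ∈ N.image (fun e => e.image φ) := by
        rw [← hMN]; exact mem_image_of_mem _ he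
      rw [mem_image] at this
      obtain ⟨f, hf, hfe⟩ := this
      rwa [← hinj (hsN f hf) (hsM e he) hfe]
    · intro he
      have : e.image φ ∈ M.image (fun e => e.image φ) := by
        rw [hMN]; exact mem_image_of_mem _ he
      rw [mem_image] at this
      obtain ⟨f, hf, hfe⟩ := this
      rwa [← hinj (hsM f hf) (hsN e he) hfe]

theorem fm_sub_clique {r : ℕ} {Ps : Set (Finset (Finset ℕ))} {K L : Finset (Finset ℕ)}
    (h : IsClique r Ps K) (hL : L ⊆ K) : IsClique r Ps L :=
  ⟨fun e he => h.1 e (hL he), fun e he f hf => h.2.1 e (hL he) f (hL hf),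
    fun e he f hf => h.2.2 e (hL he) f (hL hf)⟩

theorem fm_z_attained (r : ℕ) (Ps : Set (Finset (Finset ℕ))) (M : Finset (Finset ℕ)) (k : ℕ)
    (hk : k ≤ zClique r Ps M) : ∃ K ⊆ M, IsClique r Ps K ∧ K.card = k := by
  have hne : {k | ∃ K : Finset (Finset ℕ), K ⊆ M ∧ IsClique r Ps K ∧ K.card = k}.Nonempty :=
    ⟨0, ∅, empty_subset _, ⟨by simp, by simp, by simp⟩, rfl⟩
  have hbdd : BddAbove {k | ∃ K : Finset (Finset ℕ), K ⊆ M ∧ IsClique r Ps K ∧ K.card = k} := by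
    refine ⟨M.card, ?_⟩
    rintro _ ⟨K, hK, _, rfl⟩
    exact card_le_card hK
  obtain ⟨K, h1, h2, h3⟩ := Nat.sSup_mem hne hbdd
  have hk' : k ≤ K.card := by rw [h3]; exact hk
  obtain ⟨L, hL, hLc⟩ := exists_subset_card_eq hk'
  exact ⟨L, hL.trans h1, fm_sub_clique h2 hL, hLc⟩

/-- The first moment bound. -/
theorem fm_bad (r n k : ℕ) (hr : 2 ≤ r) (hkn : k ≤ n) (Ps : Set (Finset (Finset ℕ))) :
    ((matchingFamilies r n).filter (fun M => k ≤ zClique r Ps M)).card * (r * k).factorial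
      ≤ cliqueCount r Ps k * (n ^ k * r.factorial ^ k) * (matchingFamilies r n).card := by
  rw [fm_matching_eq r n hr]
  set V := Icc 1 (r * n) with hV
  have hVc : V.card = r * n := by rw [hV, Nat.card_Icc]; omega
  set N := (fmPV r (Icc 1 (r * (n - k)))).card with hN
  have hNf : N * ((n - k).factorial * r.factorial ^ (n - k)) = (r * (n - k)).factorial :=
    fm_count r hr (n - k) _ (by rw [Nat.card_Icc]; omega)
  have hnf := fm_count r hr n V hVc
  -- all cliques of size k
  set S := (V.powersetCard (r * k)).biUnion (fun U => (fmPV r U).filter (IsClique r Ps)) with hS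
  have hScard : S.card ≤ (r * n).choose (r * k) * cliqueCount r Ps k := by
    have := card_biUnion_le_card_mul (V.powersetCard (r * k))
      (fun U => (fmPV r U).filter (IsClique r Ps)) (cliqueCount r Ps k)
      (fun U hU => fm_clique_on r hr Ps k U (mem_powersetCard.mp hU).2)
    rwa [card_powersetCard, hVc] at this
  have hbad : ((fmPV r V).filter (fun M => k ≤ zClique r Ps M)).card ≤ S.card * N := by
    refine le_trans (card_le_card (t := S.biUnion (fun K => (fmPV r V).filter (fun M => K ⊆ M))) ?_)
      (card_biUnion_le_card_mul _ _ _ ?_)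
    · intro M hM
      rw [mem_filter] at hM
      obtain ⟨hM, hz⟩ := hM
      obtain ⟨K, hKM, hcl, hKc⟩ := fm_z_attained r Ps M k hz
      rw [mem_biUnion]
      refine ⟨K, ?_, mem_filter.mpr ⟨hM, hKM⟩⟩
      rw [hS, mem_biUnion]
      refine ⟨K.biUnion id, ?_, ?_⟩
      · rw [mem_powersetCard, fm_card_biUnion hcl.1 hcl.2.1, hKc, mul_comm]
        refine ⟨?_, rfl⟩
        rw [← (fm_mem_PV.mp hM).2.2]
        exact biUnion_subset_biUnion_of_subset_left id hKM
      · rw [mem_filter, fm_mem_PV]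
        exact ⟨⟨hcl.1, hcl.2.1, rfl⟩, hcl⟩
    · intro K hK
      rw [hS, mem_biUnion] at hK
      obtain ⟨U, hU, hK⟩ := hK
      rw [mem_powersetCard] at hU
      rw [mem_filter, fm_mem_PV] at hK
      obtain ⟨⟨a, b, c⟩, -⟩ := hK
      rw [fm_card_ext r hr V K a b (by rw [c]; exact hU.1), c]
      have h5 : (V \ U).card = r * (n - k) := by
        rw [card_sdiff_of_subset hU.1, hVc, hU.2, Nat.mul_sub]
      have h6 := fm_count r hr (n - k) _ h5
      rw [← hNf] at h6
      exact (Nat.eq_of_mul_eq_mul_right (by positivity) h6).le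
  have hch := Nat.choose_mul_factorial_mul_factorial (n := r * n) (k := r * k)
      (Nat.mul_le_mul_left r hkn)
  rw [← Nat.mul_sub] at hch
  -- numeric identity
  have hnum : (r * n).choose (r * k) * N * (r * k).factorial
      ≤ n ^ k * r.factorial ^ k * (fmPV r V).card := by
    have hpos : 0 < (n - k).factorial * r.factorial ^ (n - k) := by positivity
    refine Nat.le_of_mul_le_mul_right ?_ hpos
    have hd : (n - k).factorial * n.descFactorial k = n.factorial :=
      Nat.factorial_mul_descFactorial hkn
    have hp : r.factorial ^ n = r.factorial ^ k * r.factorial ^ (n - k) := by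
      rw [← pow_add]; congr 1; omega
    calc _ = (r * n).choose (r * k) * (r * k).factorial *
          (N * ((n - k).factorial * r.factorial ^ (n - k))) := by ring
      _ = (r * n).factorial := by rw [hNf, hch]
      _ = (fmPV r V).card * (n.factorial * r.factorial ^ n) := hnf.symm
      _ = n.descFactorial k * (r.factorial ^ k * (fmPV r V).card *
          ((n - k).factorial * r.factorial ^ (n - k))) := by rw [← hd, hp]; ring
      _ ≤ n ^ k * (r.factorial ^ k * (fmPV r V).card *
          ((n - k).factorial * r.factorial ^ (n - k))) :=
          Nat.mul_le_mul_right _ (Nat.descFactorial_le_pow n k)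
      _ = _ := by ring
  calc _ ≤ S.card * N * (r * k).factorial := Nat.mul_le_mul_right _ hbad
    _ ≤ ((r * n).choose (r * k) * cliqueCount r Ps k) * N * (r * k).factorial := by gcongr
    _ = cliqueCount r Ps k * ((r * n).choose (r * k) * N * (r * k).factorial) := by ring
    _ ≤ cliqueCount r Ps k * (n ^ k * r.factorial ^ k * (fmPV r V).card) := by gcongr
    _ = _ := by ring

theorem fm_pos (r n : ℕ) (hr : 2 ≤ r) : 0 < (matchingFamilies r n).card := by
  rw [fm_matching_eq r n hr]
  have h := fm_count r hr n (Icc 1 (r * n)) (by rw [Nat.card_Icc]; omega)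
  rcases Nat.eq_zero_or_pos (fmPV r (Icc 1 (r * n))).card with h0 | h0
  · rw [h0, zero_mul] at h
    exact absurd h.symm (Nat.factorial_ne_zero _)
  · exact h0

theorem fm_z_le (r n : ℕ) (Ps : Set (Finset (Finset ℕ))) (M : Finset (Finset ℕ))
    (hM : M ∈ matchingFamilies r n) : zClique r Ps M ≤ n := by
  obtain ⟨K, hK, _, hc⟩ := fm_z_attained r Ps M _ le_rfl
  unfold matchingFamilies at hM
  rw [mem_filter] at hM
  rw [← hc, ← hM.2.1]
  exact card_le_card hK

/-- Real-valued form: the fraction of bad matchings is at most `(1/2)^k`. -/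
theorem fm_ratio (r : ℕ) (hr : 2 ≤ r) (Ps : Set (Finset (Finset ℕ)))
    (C x : ℝ) (hC : 0 < C) (n k : ℕ) (hk0 : 0 < k)
    (ha : (cliqueCount r Ps k : ℝ) ≤ C ^ k * (k : ℝ) ^ ((k : ℝ) * x))
    (hk : 2 * (r.factorial * C * Real.exp 1) * n ≤ (k : ℝ) ^ ((r : ℝ) - x)) :
    (((matchingFamilies r n).filter (fun M => k ≤ zClique r Ps M)).card : ℝ)
      ≤ (1 / 2) ^ k * ((matchingFamilies r n).card : ℝ) := by
  rcases Nat.lt_or_ge n k with hnk | hkn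
  · have : (matchingFamilies r n).filter (fun M => k ≤ zClique r Ps M) = ∅ := by
      rw [filter_eq_empty_iff]
      intro M hM h
      have := fm_z_le r n Ps M hM
      omega
    rw [this, card_empty, Nat.cast_zero]
    positivity
  · have h := fm_bad r n k hr hkn Ps
    have hkR : (0 : ℝ) < k := by exact_mod_cast hk0
    set B := ((matchingFamilies r n).filter (fun M => k ≤ zClique r Ps M)).card
    set T := (matchingFamilies r n).card
    have h' : (B : ℝ) * ((r * k).factorial : ℝ)
        ≤ cliqueCount r Ps k * ((n : ℝ) ^ k * (r.factorial : ℝ) ^ k) * T := by exact_mod_cast h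
    have hf : (k : ℝ) ^ (r * k) ≤ Real.exp 1 ^ k * ((r * k).factorial : ℝ) := by
      have := Real.pow_div_factorial_le_exp (k : ℝ) hkR.le (r * k)
      rw [div_le_iff₀ (by positivity)] at this
      rwa [← Real.exp_nat_mul, mul_one]
    have hpw : (k : ℝ) ^ (r * k) = (k : ℝ) ^ ((k : ℝ) * x) * ((k : ℝ) ^ ((r : ℝ) - x)) ^ k := by
      rw [← Real.rpow_natCast ((k : ℝ) ^ ((r : ℝ) - x)), ← Real.rpow_mul hkR.le,
        ← Real.rpow_add hkR, ← Real.rpow_natCast]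
      congr 1
      push_cast
      ring
    have hkx : (0 : ℝ) < (k : ℝ) ^ ((k : ℝ) * x) := Real.rpow_pos_of_pos hkR _
    have hY : (0 : ℝ) < (k : ℝ) ^ ((r : ℝ) - x) := Real.rpow_pos_of_pos hkR _
    set Y := (k : ℝ) ^ ((r : ℝ) - x)
    set Z := (k : ℝ) ^ ((k : ℝ) * x)
    have hbase : (r.factorial : ℝ) * C * Real.exp 1 * n ≤ 1 / 2 * Y := by linarith
    have hpow : ((r.factorial : ℝ) * C * Real.exp 1 * n) ^ k ≤ (1 / 2 * Y) ^ k :=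
      pow_le_pow_left₀ (by positivity) hbase k
    have hfin : (B : ℝ) * (Z * Y ^ k) ≤ ((1 / 2) ^ k * T) * (Z * Y ^ k) := by
      calc (B : ℝ) * (Z * Y ^ k) ≤ B * (Real.exp 1 ^ k * ((r * k).factorial : ℝ)) := by
            rw [← hpw]; gcongr
        _ = Real.exp 1 ^ k * (B * ((r * k).factorial : ℝ)) := by ring
        _ ≤ Real.exp 1 ^ k * (cliqueCount r Ps k * ((n : ℝ) ^ k * (r.factorial : ℝ) ^ k) * T) := by
            gcongr
        _ ≤ Real.exp 1 ^ k * ((C ^ k * Z) * ((n : ℝ) ^ k * (r.factorial : ℝ) ^ k) * T) := by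
            gcongr
        _ = ((r.factorial : ℝ) * C * Real.exp 1 * n) ^ k * (Z * T) := by
            simp only [mul_pow]; ring
        _ ≤ (1 / 2 * Y) ^ k * (Z * T) := by gcongr
        _ = _ := by simp only [mul_pow]; ring
    exact le_of_mul_le_mul_right hfin (by positivity)

/-- **Lemma (generic first moment method).** If `a_Ps(k) ≤ C^k·k^(kx)` for all `k ≥ 2`,
where `C > 0` and `0 ≤ x < r`, then a.a.s. `z_Ps(RM_n^(r)) = O(n^(1/(r−x)))`. -/
theorem first_moment_meta (r : ℕ) (hr : 2 ≤ r) (Ps : Set (Finset (Finset ℕ)))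
    (hPs : ∀ P ∈ Ps, IsOrderedMatching r 2 P)
    (C x : ℝ) (hC : 0 < C) (hx0 : 0 ≤ x) (hxr : x < (r : ℝ))
    (ha : ∀ k : ℕ, 2 ≤ k → (cliqueCount r Ps k : ℝ) ≤ C ^ k * (k : ℝ) ^ ((k : ℝ) * x)) :
    ∃ C'' : ℝ, 0 < C'' ∧
      Filter.Tendsto
        (fun n : ℕ => prob r n (fun M =>
          (zClique r Ps M : ℝ) ≤ C'' * (n : ℝ) ^ ((1 : ℝ) / ((r : ℝ) - x))))
        Filter.atTop (nhds 1) := by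
  have hd : 0 < (r : ℝ) - x := by linarith
  set D : ℝ := 2 * (r.factorial * C * Real.exp 1) with hD
  have hDpos : 0 < D := by positivity
  set C'' : ℝ := max 1 (D ^ ((1 : ℝ) / ((r : ℝ) - x))) with hC''
  have hC1 : 1 ≤ C'' := le_max_left _ _
  have hCpos : 0 < C'' := by linarith
  have hCD : D ≤ C'' ^ ((r : ℝ) - x) := by
    calc D = (D ^ ((1 : ℝ) / ((r : ℝ) - x))) ^ ((r : ℝ) - x) := by
          rw [← Real.rpow_mul hDpos.le, one_div_mul_cancel hd.ne', Real.rpow_one]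
      _ ≤ _ := Real.rpow_le_rpow (by positivity) (le_max_right _ _) hd.le
  refine ⟨C'', hCpos, ?_⟩
  set α : ℝ := (1 : ℝ) / ((r : ℝ) - x) with hα
  have hαpos : 0 < α := by positivity
  have hlow : ∀ n : ℕ, 1 ≤ n → 1 - (1 / 2 : ℝ) ^ (⌊C'' * (n : ℝ) ^ α⌋₊ + 1) ≤
      prob r n (fun M => (zClique r Ps M : ℝ) ≤ C'' * (n : ℝ) ^ α) := by
    intro n hn
    have hnR : (1 : ℝ) ≤ n := by exact_mod_cast hn
    have hnα : 1 ≤ (n : ℝ) ^ α := Real.one_le_rpow hnR hαpos.le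
    have hprod : 1 ≤ C'' * (n : ℝ) ^ α := by nlinarith
    set k := ⌊C'' * (n : ℝ) ^ α⌋₊ + 1 with hk
    have hk2 : 2 ≤ k := by
      have : 1 ≤ ⌊C'' * (n : ℝ) ^ α⌋₊ := Nat.one_le_floor_iff _ |>.mpr hprod
      omega
    have hkgt : C'' * (n : ℝ) ^ α ≤ k := by
      rw [hk]; push_cast; exact (Nat.lt_floor_add_one _).le
    have hkk : D * n ≤ (k : ℝ) ^ ((r : ℝ) - x) := by
      calc D * n ≤ C'' ^ ((r : ℝ) - x) * n := by gcongr
        _ = (C'' * (n : ℝ) ^ α) ^ ((r : ℝ) - x) := by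
          rw [Real.mul_rpow hCpos.le (by positivity), ← Real.rpow_mul (by positivity), hα,
            one_div_mul_cancel hd.ne', Real.rpow_one]
        _ ≤ _ := Real.rpow_le_rpow (by positivity) hkgt hd.le
    have hb := fm_ratio r hr Ps C x hC n k (by omega) (ha k hk2) hkk
    have hT : (0 : ℝ) < (matchingFamilies r n).card := by exact_mod_cast fm_pos r n hr
    have hsplit := card_filter_add_card_filter_not (s := matchingFamilies r n)
      (fun M => (zClique r Ps M : ℝ) ≤ C'' * (n : ℝ) ^ α)
    have heq : (matchingFamilies r n).filter
        (fun M => ¬ ((zClique r Ps M : ℝ) ≤ C'' * (n : ℝ) ^ α))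
        = (matchingFamilies r n).filter (fun M => k ≤ zClique r Ps M) := by
      apply filter_congr
      intro M _
      rw [not_le, hk, Nat.succ_le_iff, Nat.floor_lt (by positivity)]
    rw [heq] at hsplit
    have hs' : (((matchingFamilies r n).filter
        (fun M => (zClique r Ps M : ℝ) ≤ C'' * (n : ℝ) ^ α)).card : ℝ)
        + (((matchingFamilies r n).filter (fun M => k ≤ zClique r Ps M)).card : ℝ)
        = ((matchingFamilies r n).card : ℝ) := by exact_mod_cast hsplit
    unfold prob
    rw [le_div_iff₀ hT]
    linarith
  have hup : ∀ n : ℕ, prob r n (fun M => (zClique r Ps M : ℝ) ≤ C'' * (n : ℝ) ^ α) ≤ 1 := by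
    intro n
    unfold prob
    apply div_le_one_of_le₀
    · exact_mod_cast card_le_card (filter_subset _ _)
    · positivity
  have hk : Filter.Tendsto (fun n : ℕ => ⌊C'' * (n : ℝ) ^ α⌋₊ + 1) Filter.atTop Filter.atTop := by
    apply (Filter.tendsto_add_atTop_nat 1).comp
    apply tendsto_nat_floor_atTop.comp
    apply Filter.Tendsto.const_mul_atTop hCpos
    exact (tendsto_rpow_atTop hαpos).comp tendsto_natCast_atTop_atTop
  have hlim : Filter.Tendsto (fun n : ℕ => 1 - (1 / 2 : ℝ) ^ (⌊C'' * (n : ℝ) ^ α⌋₊ + 1))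
      Filter.atTop (nhds 1) := by
    have h0 : Filter.Tendsto (fun m : ℕ => (1 / 2 : ℝ) ^ m) Filter.atTop (nhds 0) :=
      tendsto_pow_atTop_nhds_zero_of_lt_one (by norm_num) (by norm_num)
    have := (h0.comp hk).const_sub 1
    simpa using this
  refine tendsto_of_tendsto_of_tendsto_of_le_of_le' hlim tendsto_const_nhds ?_
    (Filter.Eventually.of_forall hup)
  filter_upwards [Filter.eventually_ge_atTop 1] with n hn
  exact hlow n hn
end

section
/- Let 𝒫 be a set of r-patterns, let M be a nonempty ordered r-matching, let N ⊆ M be a 𝒫-clique, and let 𝒬 ⊆ 𝒫. Suppose that the relation ≺ on N defined by 'e ≺ f if and only if min e < min f and e, f form a pattern belonging to 𝒬' is transitive (hence a strict partial order on N). Then z_{𝒫∖𝒬}(M) ≥ |N| / z_𝒬(M). -/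
open Finset
open scoped Classical

lemma card_le_zClique {r : ℕ} {Ps : Set (Finset (Finset ℕ))} {M K : Finset (Finset ℕ)}
    (hK : K ⊆ M) (hc : IsClique r Ps K) : K.card ≤ zClique r Ps M := by
  refine le_csSup ⟨M.card, ?_⟩ ⟨K, hK, hc, rfl⟩
  rintro k ⟨L, hL, -, rfl⟩
  exact Finset.card_le_card hL

lemma min_ne_of_disjoint {r : ℕ} {e f : Finset ℕ} (he : e.card = r) (hf : f.card = r)
    (hne : e ≠ f) (hd : Disjoint e f) : e.min ≠ f.min := by
  intro h
  rcases Finset.eq_empty_or_nonempty e with h0 | h0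
  · subst h0
    apply hne
    symm
    rw [← Finset.card_eq_zero, hf, ← he, Finset.card_empty]
  · obtain ⟨a, ha⟩ := Finset.min_of_nonempty h0
    exact Finset.disjoint_left.mp hd (Finset.mem_of_min ha) (Finset.mem_of_min (h ▸ ha))

/-- **Lemma (Dilworth template).** If the relation `e ≺ f ⟺ min e < min f` and `e, f` form a
pattern in `Qs ⊆ Ps` is transitive on a `Ps`-clique `N ⊆ M`, then
`z_{Ps∖Qs}(M) ≥ |N| / z_Qs(M)`. -/
theorem dilworth_template (r n : ℕ) (Ps Qs : Set (Finset (Finset ℕ))) (hQP : Qs ⊆ Ps)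
    (M N : Finset (Finset ℕ)) (hM : IsOrderedMatching r n M) (hMne : M.Nonempty)
    (hNM : N ⊆ M) (hNcl : IsClique r Ps N)
    (htrans : ∀ e ∈ N, ∀ f ∈ N, ∀ g ∈ N,
      (e.min < f.min ∧ ∃ Q ∈ Qs, FormsPattern r e f Q) →
      (f.min < g.min ∧ ∃ Q ∈ Qs, FormsPattern r f g Q) →
      (e.min < g.min ∧ ∃ Q ∈ Qs, FormsPattern r e g Q)) :
    (N.card : ℝ) / (zClique r Qs M : ℝ) ≤ (zClique r (Ps \ Qs) M : ℝ) := by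
  have hmin : ∀ e ∈ N, ∀ f ∈ N, e ≠ f → e.min ≠ f.min := fun e he f hf hne =>
    min_ne_of_disjoint (hNcl.1 e he) (hNcl.1 f hf) hne (hNcl.2.1 e he f hf hne)
  let C : Finset ℕ → Finset (Finset (Finset ℕ)) := fun e =>
    N.powerset.filter (fun K => e ∈ K ∧ IsClique r Qs K ∧ ∀ x ∈ K, x.min ≤ e.min)
  let h : Finset ℕ → ℕ := fun e => (C e).sup Finset.card
  have hC : ∀ e K, K ∈ C e ↔ K ⊆ N ∧ e ∈ K ∧ IsClique r Qs K ∧ ∀ x ∈ K, x.min ≤ e.min := by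
    intro e K
    simp [C]
  have hsing : ∀ e ∈ N, {e} ∈ C e := by
    intro e he
    rw [hC]
    refine ⟨by simpa using he, by simp, ⟨?_, ?_, ?_⟩,
      fun x hx => (Finset.mem_singleton.1 hx) ▸ le_rfl⟩
    · simpa using hNcl.1 e he
    · intro a ha b hb hab
      simp only [Finset.mem_singleton] at ha hb
      exact absurd (ha.trans hb.symm) hab
    · intro a ha b hb hab
      simp only [Finset.mem_singleton] at ha hb
      exact absurd (ha.trans hb.symm) hab
  have hstep : ∀ e ∈ N, ∀ f ∈ N, e.min < f.min → (∃ Q ∈ Qs, FormsPattern r e f Q) →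
      h e < h f := by
    intro e he f hf hlt hQ
    obtain ⟨K, hK, hKe⟩ := Finset.exists_mem_eq_sup (C e) ⟨_, hsing e he⟩ Finset.card
    have hKe' : h e = K.card := hKe
    obtain ⟨hKN, heK, hKcl, hKmin⟩ := (hC e K).1 hK
    have hfK : f ∉ K := fun hh => absurd (hKmin f hh) (not_le.2 hlt)
    have hxf : ∀ x ∈ K, ∃ Q ∈ Qs, FormsPattern r x f Q := by
      intro x hx
      by_cases hxe : x = e
      · rw [hxe]; exact hQ
      · have h1 : x.min < e.min :=
          lt_of_le_of_ne (hKmin x hx) (hmin x (hKN hx) e he hxe)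
        exact (htrans x (hKN hx) e he f hf ⟨h1, hKcl.2.2 x hx e heK hxe⟩ ⟨hlt, hQ⟩).2
    have hsub : insert f K ⊆ N := Finset.insert_subset hf hKN
    have hmem : insert f K ∈ C f := by
      rw [hC]
      refine ⟨hsub, Finset.mem_insert_self _ _, ⟨fun a ha => hNcl.1 a (hsub ha),
        fun a ha b hb => hNcl.2.1 a (hsub ha) b (hsub hb), ?_⟩, ?_⟩
      · intro a ha b hb hab
        rcases Finset.mem_insert.1 ha with rfl | haK
        · rcases Finset.mem_insert.1 hb with rfl | hbK
          · exact absurd rfl hab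
          · obtain ⟨Q, hQ1, hQ2⟩ := hxf b hbK
            exact ⟨Q, hQ1, formsPattern_symm hQ2⟩
        · rcases Finset.mem_insert.1 hb with rfl | hbK
          · exact hxf a haK
          · exact hKcl.2.2 a haK b hbK hab
      · intro x hx
        rcases Finset.mem_insert.1 hx with rfl | hx
        · exact le_rfl
        · exact (hKmin x hx).trans hlt.le
    have hle : (insert f K).card ≤ h f := Finset.le_sup (f := Finset.card) hmem
    rw [Finset.card_insert_of_notMem hfK] at hle
    omega
  have hmaps : ∀ e ∈ N, h e ∈ Finset.Icc 1 (zClique r Qs M) := by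
    intro e he
    rw [Finset.mem_Icc]
    constructor
    · have : ({e} : Finset (Finset ℕ)).card ≤ h e :=
        Finset.le_sup (f := Finset.card) (hsing e he)
      simpa using this
    · refine Finset.sup_le fun K hK => ?_
      obtain ⟨hKN, -, hKcl, -⟩ := (hC e K).1 hK
      exact card_le_zClique (hKN.trans hNM) hKcl
  have hfib : ∀ k ∈ Finset.Icc 1 (zClique r Qs M),
      (N.filter (fun e => h e = k)).card ≤ zClique r (Ps \ Qs) M := by
    intro k _
    have hsub : N.filter (fun e => h e = k) ⊆ N := Finset.filter_subset _ _
    refine card_le_zClique (hsub.trans hNM) ⟨fun a ha => hNcl.1 a (hsub ha),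
        fun a ha b hb => hNcl.2.1 a (hsub ha) b (hsub hb), ?_⟩
    intro a ha b hb hab
    obtain ⟨haN, hak⟩ := Finset.mem_filter.1 ha
    obtain ⟨hbN, hbk⟩ := Finset.mem_filter.1 hb
    obtain ⟨P, hP, hF⟩ := hNcl.2.2 a haN b hbN hab
    refine ⟨P, ⟨hP, fun hPQ => ?_⟩, hF⟩
    rcases lt_or_gt_of_ne (hmin a haN b hbN hab) with hlt | hlt
    · have := hstep a haN b hbN hlt ⟨P, hPQ, hF⟩
      omega
    · have := hstep b hbN a haN hlt ⟨P, hPQ, formsPattern_symm hF⟩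
      omega
  have hfinal : N.card ≤ zClique r (Ps \ Qs) M * zClique r Qs M := by
    have := Finset.card_le_mul_card_image_of_maps_to hmaps _ hfib
    simpa using this
  refine div_le_of_le_mul₀ (Nat.cast_nonneg _) (Nat.cast_nonneg _) ?_
  exact_mod_cast hfinal
end
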